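/- arXiv:1910.05955 — 4 statements merged into one kernel-verified Lean document; each statement's English description precedes it below -/
import Mathlib

section
/- The group of isometries of L₂₀, i.e. the group {g ∈ GL(3,ℤ) : gᵀ L₂₀ g = L₂₀}, has order 16 and is generated by the three matrices ρ₁ = [[0,1,0],[1,0,0],[0,0,1]], ρ₂ = [[1,0,-1],[0,-1,0],[0,0,-1]], and -Id₃. -/
/-!
`L₂₀` is the member `m = 10` of the family of lattices `{(a, b, c) ∈ ℤ³ : a ≡ b ≡ c mod 2}` with
the form `a² + b² + m c²`, written in the basis `(2, 0, 0), (0, 2, 0), (-1, -1, 1)`. For `m > 2`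
the vectors of norm `4` are exactly `±e₁, ±e₂`, so an isometry sends `e₁` to one of these four
vectors, and an isometry fixing `e₁` sends `e₂` to `±e₂`. An isometry fixing both is the identity
or the reflection in the plane they span. Each of these `4`, `2` and `2` possibilities is realised
by a word in `ρ₁, ρ₂, -1`, so composing the words gives every isometry, and there are
`4 * 2 * 2 = 16` of them.
-/

open Matrix

/-- The lattice `L₂₀ = [[4,0,-2],[0,4,-2],[-2,-2,12]]`. -/
def L20 : Matrix (Fin 3) (Fin 3) ℤ := !![4, 0, -2; 0, 4, -2; -2, -2, 12]

/-- `ρ₁ = [[0,1,0],[1,0,0],[0,0,1]]`, as an element of `GL(3,ℤ)` (it is an involution). -/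
def rho1 : GL (Fin 3) ℤ :=
  ⟨!![0, 1, 0; 1, 0, 0; 0, 0, 1], !![0, 1, 0; 1, 0, 0; 0, 0, 1], by decide, by decide⟩

/-- `ρ₂ = [[1,0,-1],[0,-1,0],[0,0,-1]]`, as an element of `GL(3,ℤ)` (it is an involution). -/
def rho2 : GL (Fin 3) ℤ :=
  ⟨!![1, 0, -1; 0, -1, 0; 0, 0, -1], !![1, 0, -1; 0, -1, 0; 0, 0, -1], by decide, by decide⟩

section IsometryGroup

variable {n R : Type*} [Fintype n] [DecidableEq n] [CommRing R]

/-- The isometries of the bilinear form with Gram matrix `A`, as a subgroup of the general linear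
group. -/
def isometryGroup (A : Matrix n n R) : Subgroup (GL n R) where
  carrier := {g | g.valᵀ * A * g.val = A}
  one_mem' := by simp
  mul_mem' {g h} hg hh := by
    rw [Set.mem_ofPred_eq] at hg hh ⊢
    calc (g * h).valᵀ * A * (g * h).val
        = h.valᵀ * (g.valᵀ * A * g.val) * h.val := by
          simp only [Units.val_mul, transpose_mul, Matrix.mul_assoc]
      _ = A := by rw [hg, hh]
  inv_mem' {g} hg := by
    rw [Set.mem_ofPred_eq] at hg ⊢
    calc g⁻¹.valᵀ * A * g⁻¹.val
        = g⁻¹.valᵀ * (g.valᵀ * A * g.val) * g⁻¹.val := by rw [hg]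
      _ = (g.val * g⁻¹.val)ᵀ * A * (g.val * g⁻¹.val) := by
          simp only [transpose_mul, Matrix.mul_assoc]
      _ = A := by rw [g.mul_inv, transpose_one, Matrix.one_mul, Matrix.mul_one]

theorem mem_isometryGroup_iff {A : Matrix n n R} {g : GL n R} :
    g ∈ isometryGroup A ↔ g.valᵀ * A * g.val = A :=
  Iff.rfl

theorem neg_one_mem_isometryGroup (A : Matrix n n R) : -1 ∈ isometryGroup A := by
  simp [mem_isometryGroup_iff]

theorem mem_isometryGroup_iff_forall_col {A : Matrix n n R} {g : GL n R} :
    g ∈ isometryGroup A ↔ ∀ i j, g.val.col i ⬝ᵥ A *ᵥ g.val.col j = A i j := by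
  simp only [dotProduct_mulVec]
  exact mem_isometryGroup_iff.trans Matrix.ext_iff.symm

theorem col_inv_mul_eq_single {g h : GL n R} {j : n} (hgh : g.val.col j = h.val.col j) :
    (h⁻¹ * g).val.col j = Pi.single j 1 := by
  rw [← mulVec_single_one, ← mulVec_single_one] at hgh
  rw [← mulVec_single_one, Units.val_mul, ← mulVec_mulVec, hgh, mulVec_mulVec, h.inv_mul,
    one_mulVec]

end IsometryGroup

/-- The Gram matrix of the lattice `{(a, b, c) ∈ ℤ³ : a ≡ b ≡ c mod 2}` with the quadratic form
`a² + b² + m c²`, in the basis `(2, 0, 0), (0, 2, 0), (-1, -1, 1)`; for `m = 10` it is `L₂₀`. -/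
def parityGram (m : ℤ) : Matrix (Fin 3) (Fin 3) ℤ :=
  !![4, 0, -2; 0, 4, -2; -2, -2, m + 2]

theorem dotProduct_parityGram_mulVec (m : ℤ) (v w : Fin 3 → ℤ) :
    v ⬝ᵥ parityGram m *ᵥ w =
      (2 * v 0 - v 2) * (2 * w 0 - w 2) + (2 * v 1 - v 2) * (2 * w 1 - w 2) + m * (v 2 * w 2) := by
  simp only [parityGram, dotProduct, mulVec, Fin.sum_univ_three, of_apply, cons_val]
  ring

/-- The isometry `e₁ ↦ e₂ ↦ -e₁` of order four, acting as `-1` on the line orthogonal to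
`e₁, e₂`. -/
def quarterTurn : GL (Fin 3) ℤ := rho1 * rho2

/-- The reflection in the plane spanned by `e₁` and `e₂`. -/
def planeReflection : GL (Fin 3) ℤ := -1 * quarterTurn ^ 2

/-- The normal form of an isometry: the first factor prescribes the image of `e₁`, the second the
sign on `e₂` among isometries fixing `e₁`, the third is an isometry fixing `e₁` and `e₂`. -/
def isometryWord (i : Fin 4 × Fin 2 × Fin 2) : GL (Fin 3) ℤ :=
  quarterTurn ^ (i.1 : ℕ) * (rho2 ^ (i.2.1 : ℕ) * planeReflection ^ (i.2.2 : ℕ))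

theorem isometryWord_injective : Function.Injective isometryWord := by
  have hval : ∀ i j, (isometryWord i).val = (isometryWord j).val → i = j := by decide +kernel
  exact fun i j h => hval i j (congrArg Units.val h)

theorem isometryWord_mem_closure (i : Fin 4 × Fin 2 × Fin 2) :
    isometryWord i ∈ Subgroup.closure {rho1, rho2, -1} := by
  have h1 : rho1 ∈ Subgroup.closure {rho1, rho2, -1} := Subgroup.subset_closure (by simp)
  have h2 : rho2 ∈ Subgroup.closure {rho1, rho2, -1} := Subgroup.subset_closure (by simp)
  have hneg : -1 ∈ Subgroup.closure {rho1, rho2, -1} := Subgroup.subset_closure (by simp)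
  have hturn : quarterTurn ∈ Subgroup.closure {rho1, rho2, -1} := mul_mem h1 h2
  have hrefl : planeReflection ∈ Subgroup.closure {rho1, rho2, -1} :=
    mul_mem hneg (pow_mem hturn 2)
  exact mul_mem (pow_mem hturn _) (mul_mem (pow_mem h2 _) (pow_mem hrefl _))

theorem rho1_mem_isometryGroup_parityGram (m : ℤ) : rho1 ∈ isometryGroup (parityGram m) := by
  simp only [mem_isometryGroup_iff_forall_col, dotProduct_parityGram_mulVec]
  simp [Fin.forall_fin_succ, rho1, parityGram, add_comm]

theorem rho2_mem_isometryGroup_parityGram (m : ℤ) : rho2 ∈ isometryGroup (parityGram m) := by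
  simp only [mem_isometryGroup_iff_forall_col, dotProduct_parityGram_mulVec]
  simp [Fin.forall_fin_succ, rho2, parityGram, add_comm]

theorem closure_le_isometryGroup_parityGram (m : ℤ) :
    Subgroup.closure {rho1, rho2, -1} ≤ isometryGroup (parityGram m) := by
  rw [Subgroup.closure_le]
  rintro g (rfl | rfl | rfl)
  exacts [rho1_mem_isometryGroup_parityGram m, rho2_mem_isometryGroup_parityGram m,
    neg_one_mem_isometryGroup _]

section NormFour

variable {m : ℤ} {v : Fin 3 → ℤ}

theorem apply_two_eq_zero_of_parityGram_norm_eq_four (hm : 2 < m)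
    (hv : v ⬝ᵥ parityGram m *ᵥ v = 4) : v 2 = 0 := by
  rw [dotProduct_parityGram_mulVec] at hv
  have hlt : v 2 ^ 2 < 2 ^ 2 := by
    nlinarith [sq_nonneg (2 * v 0 - v 2), sq_nonneg (2 * v 1 - v 2), sq_nonneg (v 2)]
  obtain ⟨hlo, hhi⟩ := abs_lt.mp (abs_lt_of_sq_lt_sq hlt zero_le_two)
  by_contra hne
  -- If `v 2 = ±1`, both `2 * v i - v 2` are odd, so the norm is at least `1 + 1 + m > 4`.
  have hodd (x : ℤ) : 1 ≤ (2 * x - v 2) ^ 2 :=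
    Int.add_one_le_of_lt (sq_pos_of_ne_zero (by lia))
  have hsq : v 2 * v 2 = 1 := by
    obtain h | h : v 2 = 1 ∨ v 2 = -1 := by lia
    all_goals simp [h]
  rw [hsq] at hv
  linarith [hodd (v 0), hodd (v 1)]

theorem eq_of_parityGram_norm_eq_four (hm : 2 < m) (hv : v ⬝ᵥ parityGram m *ᵥ v = 4) :
    v = ![1, 0, 0] ∨ v = ![0, 1, 0] ∨ v = ![-1, 0, 0] ∨ v = ![0, -1, 0] := by
  have h2 := apply_two_eq_zero_of_parityGram_norm_eq_four hm hv
  have hsq : v 0 ^ 2 + v 1 ^ 2 = 1 := by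
    rw [dotProduct_parityGram_mulVec, h2] at hv
    linarith
  have heta : v = ![v 0, v 1, 0] := by
    rw [← h2]
    exact (FinVec.etaExpand_eq v).symm
  rw [heta]
  obtain h0 | h0 := eq_or_ne (v 0) 0
  · obtain h1 | h1 : v 1 = 1 ∨ v 1 = -1 := by simpa [h0] using hsq
    all_goals simp [h0, h1]
  · have h1 : v 1 = 0 := by
      have hpos := sq_pos_of_ne_zero h0
      refine sq_eq_zero_iff.mp (le_antisymm ?_ (sq_nonneg _))
      lia
    obtain h0 | h0 : v 0 = 1 ∨ v 0 = -1 := by simpa [h1] using hsq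
    all_goals simp [h0, h1]

theorem exists_quarterTurn_pow_col_zero_eq (hm : 2 < m) (hv : v ⬝ᵥ parityGram m *ᵥ v = 4) :
    ∃ i : Fin 4, (quarterTurn ^ (i : ℕ)).val.col 0 = v := by
  obtain rfl | rfl | rfl | rfl := eq_of_parityGram_norm_eq_four hm hv
  exacts [⟨0, by decide⟩, ⟨1, by decide⟩, ⟨2, by decide⟩, ⟨3, by decide⟩]

theorem exists_rho2_pow_col_one_eq (hm : 2 < m) (hv : v ⬝ᵥ parityGram m *ᵥ v = 4)
    (hv0 : Pi.single 0 1 ⬝ᵥ parityGram m *ᵥ v = 0) :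
    ∃ j : Fin 2, (rho2 ^ (j : ℕ)).val.col 1 = v := by
  rw [dotProduct_parityGram_mulVec] at hv0
  obtain rfl | rfl | rfl | rfl := eq_of_parityGram_norm_eq_four hm hv
  · simp at hv0
  · exact ⟨0, by decide⟩
  · simp at hv0
  · exact ⟨1, by decide⟩

end NormFour

theorem exists_planeReflection_pow_col_two_eq {m : ℤ} {v : Fin 3 → ℤ} (hm : m ≠ 0)
    (hv : v ⬝ᵥ parityGram m *ᵥ v = m + 2) (hv0 : Pi.single 0 1 ⬝ᵥ parityGram m *ᵥ v = -2)
    (hv1 : Pi.single 1 1 ⬝ᵥ parityGram m *ᵥ v = -2) :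
    ∃ k : Fin 2, (planeReflection ^ (k : ℕ)).val.col 2 = v := by
  have h0 : 2 * v 0 - v 2 = -1 := by
    have h : 2 * (2 * v 0 - v 2) = -2 := by
      rw [dotProduct_parityGram_mulVec] at hv0
      simpa using hv0
    lia
  have h1 : 2 * v 1 - v 2 = -1 := by
    have h : 2 * (2 * v 1 - v 2) = -2 := by
      rw [dotProduct_parityGram_mulVec] at hv1
      simpa using hv1
    lia
  have hsq : v 2 * v 2 = 1 := by
    rw [dotProduct_parityGram_mulVec, h0, h1] at hv
    exact mul_left_cancel₀ hm (by linarith)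
  have heta : v = ![v 0, v 1, v 2] := (FinVec.etaExpand_eq v).symm
  obtain h2 | h2 := mul_self_eq_one_iff.mp hsq
  · obtain ⟨hz0, hz1⟩ : v 0 = 0 ∧ v 1 = 0 := by lia
    rw [heta, hz0, hz1, h2]
    exact ⟨0, by decide⟩
  · obtain ⟨hn0, hn1⟩ : v 0 = -1 ∧ v 1 = -1 := by lia
    rw [heta, hn0, hn1, h2]
    exact ⟨1, by decide⟩

section StabilizerChain

variable {m : ℤ} {g : GL (Fin 3) ℤ}

theorem exists_planeReflection_pow_eq (hm : m ≠ 0) (hg : g ∈ isometryGroup (parityGram m))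
    (h0 : g.val.col 0 = Pi.single 0 1) (h1 : g.val.col 1 = Pi.single 1 1) :
    ∃ k : Fin 2, planeReflection ^ (k : ℕ) = g := by
  have hcols := mem_isometryGroup_iff_forall_col.mp hg
  obtain ⟨k, hk⟩ := exists_planeReflection_pow_col_two_eq hm (hcols 2 2) (h0 ▸ hcols 0 2)
    (h1 ▸ hcols 1 2)
  have hfix : ∀ k : Fin 2, (planeReflection ^ (k : ℕ)).val.col 0 = Pi.single 0 1 ∧
      (planeReflection ^ (k : ℕ)).val.col 1 = Pi.single 1 1 := by decide
  refine ⟨k, Units.ext (ext_col (Fin.forall_fin_succ.mpr ⟨?_, Fin.forall_fin_two.mpr ⟨?_, hk⟩⟩))⟩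
  exacts [(hfix k).1.trans h0.symm, (hfix k).2.trans h1.symm]

theorem exists_rho2_pow_mul_eq (hm : 2 < m) (hg : g ∈ isometryGroup (parityGram m))
    (h0 : g.val.col 0 = Pi.single 0 1) :
    ∃ j k : Fin 2, rho2 ^ (j : ℕ) * planeReflection ^ (k : ℕ) = g := by
  have hcols := mem_isometryGroup_iff_forall_col.mp hg
  obtain ⟨j, hj⟩ := exists_rho2_pow_col_one_eq hm (hcols 1 1) (h0 ▸ hcols 0 1)
  have hfix : ∀ j : Fin 2, (rho2 ^ (j : ℕ)).val.col 0 = Pi.single 0 1 := by decide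
  obtain ⟨k, hk⟩ := exists_planeReflection_pow_eq (by lia)
    (mul_mem (inv_mem (pow_mem (rho2_mem_isometryGroup_parityGram m) j)) hg)
    (col_inv_mul_eq_single (h0.trans (hfix j).symm)) (col_inv_mul_eq_single hj.symm)
  exact ⟨j, k, eq_inv_mul_iff_mul_eq.mp hk⟩

theorem exists_isometryWord_eq (hm : 2 < m) (hg : g ∈ isometryGroup (parityGram m)) :
    ∃ i, isometryWord i = g := by
  obtain ⟨i, hi⟩ :=
    exists_quarterTurn_pow_col_zero_eq hm (mem_isometryGroup_iff_forall_col.mp hg 0 0)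
  have hturn : quarterTurn ∈ isometryGroup (parityGram m) :=
    mul_mem (rho1_mem_isometryGroup_parityGram m) (rho2_mem_isometryGroup_parityGram m)
  obtain ⟨j, k, hjk⟩ := exists_rho2_pow_mul_eq hm (mul_mem (inv_mem (pow_mem hturn i)) hg)
    (col_inv_mul_eq_single hi.symm)
  exact ⟨(i, j, k), eq_inv_mul_iff_mul_eq.mp hjk⟩

end StabilizerChain

theorem stmt_3_general {m : ℤ} (hm : 2 < m) :
    (isometryGroup (parityGram m) : Set (GL (Fin 3) ℤ)).ncard = 16 ∧
      isometryGroup (parityGram m) = Subgroup.closure {rho1, rho2, -1} := by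
  have hrange : (isometryGroup (parityGram m) : Set (GL (Fin 3) ℤ)) = Set.range isometryWord := by
    refine Set.Subset.antisymm (fun g hg => exists_isometryWord_eq hm hg) ?_
    rintro _ ⟨i, rfl⟩
    exact closure_le_isometryGroup_parityGram m (isometryWord_mem_closure i)
  refine ⟨?_, le_antisymm (fun g hg => ?_) (closure_le_isometryGroup_parityGram m)⟩
  · rw [hrange, Set.ncard_range_of_injective isometryWord_injective]
    simp
  · obtain ⟨i, rfl⟩ := exists_isometryWord_eq hm hg
    exact isometryWord_mem_closure i

/-- The group of isometries of `L₂₀`, i.e. `{g ∈ GL(3,ℤ) : gᵀ L₂₀ g = L₂₀}`, has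
order `16` and is generated by `ρ₁`, `ρ₂` and `-Id`. -/
theorem stmt_3 :
    Set.ncard {g : GL (Fin 3) ℤ |
        (↑g : Matrix (Fin 3) (Fin 3) ℤ)ᵀ * L20 * (↑g : Matrix (Fin 3) (Fin 3) ℤ) = L20} = 16 ∧
    {g : GL (Fin 3) ℤ |
        (↑g : Matrix (Fin 3) (Fin 3) ℤ)ᵀ * L20 * (↑g : Matrix (Fin 3) (Fin 3) ℤ) = L20} =
      ↑(Subgroup.closure {rho1, rho2, -1}) := by
  have hL : parityGram 10 = L20 := by norm_num [parityGram, L20]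
  exact hL ▸ (stmt_3_general (m := 10) (by norm_num)).imp_right (congrArg SetLike.coe)
end

section
/- The group G₂₉ has order 7680. -/
open Matrix Complex

/-- The generator `s₁ = diag(1,1,1,-1)` of Mukai's group `G₂₉`. -/
def s1 : Matrix (Fin 4) (Fin 4) ℂ := !![1,0,0,0; 0,1,0,0; 0,0,1,0; 0,0,0,-1]

/-- The generator `s₂ = (1/2)·[[1,1,i,i],[1,1,-i,-i],[-i,i,1,-1],[-i,i,-1,1]]` of `G₂₉`. -/
noncomputable def s2 : Matrix (Fin 4) (Fin 4) ℂ :=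
  (1/2 : ℂ) • !![1, 1, I, I; 1, 1, -I, -I; -I, I, 1, -1; -I, I, -1, 1]

/-- The generator `s₃` (the transposition of the first two coordinates) of `G₂₉`. -/
def s3 : Matrix (Fin 4) (Fin 4) ℂ := !![0,1,0,0; 1,0,0,0; 0,0,1,0; 0,0,0,1]

/-- The generator `s₄` (the transposition of the middle two coordinates) of `G₂₉`. -/
def s4 : Matrix (Fin 4) (Fin 4) ℂ := !![1,0,0,0; 0,0,1,0; 0,1,0,0; 0,0,0,1]

/-- Mukai's group `G₂₉` (the Shephard–Todd group `G_29`): the subgroup of `GL(4,ℂ)`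
generated by `s₁`, `s₂`, `s₃`, `s₄`. -/
def G29 : Subgroup (GL (Fin 4) ℂ) :=
  Subgroup.closure
    {g | (↑g : Matrix (Fin 4) (Fin 4) ℂ) ∈ ({s1, s2, s3, s4} : Set (Matrix (Fin 4) (Fin 4) ℂ))}

/-!
Conjugated by the reflection in `(1, 1, 1, 1)`, the group `G₂₉` permutes `80` vectors over `ℤ[i]`:
the vectors `2u eⱼ` with `u` a unit, and the vectors of four units with product `1`. It then
contains all permutation matrices, and a diagonal matrix of units of `ℤ[i]` lies in it exactly if
its determinant is `1`. The `80` vectors form a single orbit. Fixing `e₃` leaves the `12` images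
`u e₀`, `u e₁`, `u e₂` of `e₀`, because the group is unitary; fixing `e₀` as well leaves the `8`
images `u e₁`, `u e₂` of `e₁`; and an element that also fixes `e₁` is diagonal of determinant `1`
with only one entry not known to be `1`, so it is the identity. The order is `80 * 12 * 8 = 7680`.
-/

namespace G29

section Orbits

variable {G α : Type*} [Group G] [MulAction G α]

theorem card_eq_ncard_orbit_mul_card_stabilizer (H : Subgroup G) (a : α) :
    Nat.card H = (MulAction.orbit H a).ncard * Nat.card ↥(H ⊓ MulAction.stabilizer G a) := by
  have hstab : MulAction.stabilizer H a = (MulAction.stabilizer G a).subgroupOf H := rfl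
  rw [← MulAction.index_stabilizer, hstab, inf_comm, ← Subgroup.subgroupOf_map_subtype,
    Subgroup.card_map_of_injective H.subtype_injective, Subgroup.index_mul_card]

end Orbits

section Torus

variable {n A : Type*} [Fintype n] [DecidableEq n] [CommGroup A]

theorem mem_of_prod_eq_one {H : Subgroup (n → A)}
    (hH : ∀ j k a, j ≠ k → Pi.mulSingle j a / Pi.mulSingle k a ∈ H) {u : n → A}
    (hu : ∏ j, u j = 1) : u ∈ H := by
  cases isEmpty_or_nonempty n with
  | inl h => exact Subsingleton.elim 1 u ▸ H.one_mem
  | inr h =>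
    obtain ⟨k⟩ := h
    have hk : ∏ j, (Pi.mulSingle k (u j) : n → A) = 1 :=
      (map_prod (MonoidHom.mulSingle (fun _ ↦ A) k) u _).symm.trans (by rw [hu, map_one])
    have hprod : ∏ j, Pi.mulSingle j (u j) / Pi.mulSingle k (u j) = u := by
      rw [Finset.prod_div_distrib, Finset.univ_prod_mulSingle, hk, div_one]
    rw [← hprod]
    refine H.prod_mem fun j _ ↦ ?_
    obtain rfl | hjk := eq_or_ne j k
    · simp only [div_self', H.one_mem]
    · exact hH j k _ hjk

end Torus

section Monomial

variable {n R S : Type*} [Fintype n] [DecidableEq n] [CommRing R] [CommRing S]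

theorem smul_eq_mulVec (g : GL n R) (v : n → R) :
    g • v = (g : Matrix n n R) *ᵥ v := rfl

theorem map_smul_comp (f : R →+* S) (g : GL n R) (v : n → R) :
    GeneralLinearGroup.map f g • (f ∘ v) = f ∘ (g • v) :=
  funext fun j ↦ (f.map_mulVec (g : Matrix n n R) v j).symm

theorem star_smul_dotProduct_smul [StarRing R] {g : GL n R} (hg : g ∈ (unitaryGroup n R).units)
    (v w : n → R) : star (g • v) ⬝ᵥ (g • w) = star v ⬝ᵥ w := by
  have hg' : star (g : Matrix n n R) * g = 1 := mem_unitaryGroup_iff'.1 hg.1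
  rw [smul_eq_mulVec, smul_eq_mulVec, star_mulVec,
    ← dotProduct_mulVec, mulVec_mulVec, ← star_eq_conjTranspose, hg', one_mulVec]

/-- The homomorphism sending a family of units to the diagonal matrix with these entries. -/
def diagonalGL : (n → Rˣ) →* GL n R :=
  MonoidHom.toHomUnits
    { toFun u := diagonal fun j ↦ (u j : R)
      map_one' := diagonal_one
      map_mul' _ _ := (diagonal_mul_diagonal _ _).symm }

/-- The permutation matrix of `σ`, sending the `j`-th basis vector to the `σ j`-th. -/
def permGL : Equiv.Perm n →* GL n R :=
  MonoidHom.toHomUnits permMatrixHom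

theorem diagonalGL_smul (u : n → Rˣ) (v : n → R) : diagonalGL u • v = fun j ↦ ↑(u j) * v j :=
  funext fun j ↦ mulVec_diagonal _ v j

theorem permGL_smul (σ : Equiv.Perm n) (v : n → R) : (permGL σ : GL n R) • v = v ∘ ⇑σ⁻¹ :=
  permMatrix_mulVec _

theorem map_diagonalGL (f : R →+* S) (u : n → Rˣ) :
    GeneralLinearGroup.map f (diagonalGL u) = diagonalGL fun j ↦ Units.map f (u j) :=
  Units.ext (diagonal_map f.map_zero)

theorem map_permGL (f : R →+* S) (σ : Equiv.Perm n) :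
    GeneralLinearGroup.map f (permGL σ) = permGL σ :=
  Units.ext (PEquiv.map_toMatrix f σ⁻¹.toPEquiv)

theorem permGL_mul_diagonalGL_mul_inv (σ : Equiv.Perm n) (u : n → Rˣ) :
    permGL σ * diagonalGL u * (permGL σ)⁻¹ = diagonalGL (u ∘ ⇑σ⁻¹) := by
  rw [mul_inv_eq_iff_eq_mul]
  refine Units.ext (Matrix.ext_of_mulVec_single fun j ↦ ?_)
  simp only [← smul_eq_mulVec, SemigroupAction.mul_smul, permGL_smul,
    diagonalGL_smul]
  ext l
  simp

theorem diagonalGL_mulSingle_div_mem {H : Subgroup (GL n R)} {σ : Equiv.Perm n}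
    (hσ : permGL σ ∈ H) {j k : n} {a : Rˣ}
    (ha : diagonalGL (Pi.mulSingle j a / Pi.mulSingle k a) ∈ H) :
    diagonalGL (Pi.mulSingle (σ j) a / Pi.mulSingle (σ k) a) ∈ H := by
  have hconj := H.mul_mem (H.mul_mem hσ ha) (H.inv_mem hσ)
  rw [permGL_mul_diagonalGL_mul_inv] at hconj
  convert hconj using 2
  change _ = Pi.mulSingle j a ∘ ⇑σ⁻¹ / Pi.mulSingle k a ∘ ⇑σ⁻¹
  rw [Pi.mulSingle_comp_equiv, Pi.mulSingle_comp_equiv]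
  rfl

end Monomial

section Reflection

variable {n K : Type*} [Fintype n] [DecidableEq n] [Field K] [StarRing K]

theorem reflection_matrix_sq (w : n → K) :
    (1 - (2 / (star w ⬝ᵥ w)) • vecMulVec w (star w)) *
      (1 - (2 / (star w ⬝ᵥ w)) • vecMulVec w (star w)) = 1 := by
  have hsq : vecMulVec w (star w) * vecMulVec w (star w) =
      (star w ⬝ᵥ w) • vecMulVec w (star w) := by
    rw [vecMulVec_mul_vecMulVec, vecMulVec_smul]
  have hcoeff : 2 / (star w ⬝ᵥ w) * (2 / (star w ⬝ᵥ w)) * (star w ⬝ᵥ w) =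
      2 * (2 / (star w ⬝ᵥ w)) := by
    by_cases hw : star w ⬝ᵥ w = 0
    · simp [hw]
    · field_simp
  simp only [sub_mul, mul_sub, one_mul, mul_one, smul_mul_assoc, mul_smul_comm, hsq, smul_smul]
  rw [smul_sub, smul_smul, ← mul_assoc, hcoeff]
  module

/-- The reflection in the hyperplane orthogonal to `w`, namely
`v ↦ v - 2 ⟪w, v⟫ / ⟪w, w⟫ • w`. It is the identity if `w` is isotropic, because `2 / 0 = 0`. -/
def reflection (w : n → K) : GL n K where
  val := 1 - (2 / (star w ⬝ᵥ w)) • vecMulVec w (star w)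
  inv := 1 - (2 / (star w ⬝ᵥ w)) • vecMulVec w (star w)
  val_inv := reflection_matrix_sq w
  inv_val := reflection_matrix_sq w

theorem coe_reflection (w : n → K) : (reflection w : Matrix n n K) =
    1 - (2 / (star w ⬝ᵥ w)) • vecMulVec w (star w) := rfl

theorem reflection_smul (w v : n → K) :
    reflection w • v = v - (2 * (star w ⬝ᵥ v) / (star w ⬝ᵥ w)) • w := by
  rw [smul_eq_mulVec, coe_reflection, sub_mulVec, one_mulVec, smul_mulVec,
    vecMulVec_mulVec, op_smul_eq_smul, smul_smul, mul_div_right_comm]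

theorem reflection_mem_unitaryGroup (w : n → K) : reflection w ∈ (unitaryGroup n K).units := by
  have hstar : star (reflection w : Matrix n n K) = reflection w := by
    have hw : star (star w ⬝ᵥ w) = star w ⬝ᵥ w := (star_dotProduct w w).symm
    rw [coe_reflection, star_sub, star_one, star_smul, star_div₀, hw, star_ofNat,
      star_eq_conjTranspose, conjTranspose_vecMulVec, star_star]
  have hmem : (reflection w : Matrix n n K) ∈ unitaryGroup n K := by
    rw [mem_unitaryGroup_iff, hstar]
    exact reflection_matrix_sq w
  exact ⟨hmem, hmem⟩

theorem reflection_smul_root {c : K} (hc : c ≠ 0) (w : n → K) :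
    reflection (c • w) = reflection w := by
  have hc' : star c ≠ 0 := star_ne_zero.2 hc
  refine Units.ext ?_
  rw [coe_reflection, coe_reflection, star_smul, smul_dotProduct, dotProduct_smul, smul_vecMulVec,
    vecMulVec_smul, smul_smul, smul_smul]
  congr 2
  simp only [smul_eq_mul]
  field_simp

theorem conj_reflection {g : GL n K} (hg : g ∈ (unitaryGroup n K).units) (w : n → K) :
    MulAut.conj g (reflection w) = reflection (g • w) := by
  rw [MulAut.conj_apply, mul_inv_eq_iff_eq_mul]
  refine Units.ext (Matrix.ext_of_mulVec_single fun j ↦ ?_)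
  simp only [← smul_eq_mulVec, SemigroupAction.mul_smul, reflection_smul,
    star_smul_dotProduct_smul hg]
  rw [smul_sub, smul_comm]

theorem reflection_single_sub_smul_single [NeZero (2 : K)] {j k : n} (hjk : j ≠ k) {u : Kˣ}
    (hu : star (u : K) * u = 1) :
    reflection (Pi.single j 1 - (u : K) • Pi.single k 1) =
      diagonalGL (Pi.mulSingle k u / Pi.mulSingle j u) * permGL (Equiv.swap j k) := by
  have hstar : star (u : K) = ↑u⁻¹ := eq_inv_of_mul_eq_one_left hu |>.trans (by simp)
  have hnorm : star (Pi.single j 1 - (u : K) • Pi.single k 1 : n → K) ⬝ᵥ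
      (Pi.single j 1 - (u : K) • Pi.single k 1) = 2 := by
    simp [dotProduct_sub, hjk, hjk.symm, mul_comm (u : K), hu, one_add_one_eq_two]
  have hinner (v : n → K) : star (Pi.single j 1 - (u : K) • Pi.single k 1 : n → K) ⬝ᵥ v =
      v j - ↑u⁻¹ * v k := by
    simp [sub_dotProduct, hstar]
  refine Units.ext (Matrix.ext_of_mulVec_single fun l ↦ ?_)
  simp only [← smul_eq_mulVec, SemigroupAction.mul_smul, reflection_smul,
    hnorm, hinner, mul_div_cancel_left₀ _ (two_ne_zero' K), diagonalGL_smul, permGL_smul]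
  generalize (Pi.single l 1 : n → K) = v
  ext1 m
  obtain rfl | hmj := eq_or_ne m j
  · simp [hjk]
  obtain rfl | hmk := eq_or_ne m k
  · simp only [Pi.sub_apply, Pi.smul_apply, Pi.single_eq_same, Pi.single_eq_of_ne hmj, Pi.div_apply,
      Pi.mulSingle_eq_same, Pi.mulSingle_eq_of_ne hmj, div_one, Function.comp_apply,
      Equiv.swap_inv, Equiv.swap_apply_right, smul_eq_mul]
    linear_combination (-v m) * u.mul_inv
  · simp [hmj, hmk, Equiv.swap_apply_of_ne_of_ne]

end Reflection

section FrameVectors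

/-- The imaginary unit of `ℤ[i]`, as a unit. -/
def gaussianI : GaussianIntˣ := ⟨⟨0, 1⟩, ⟨0, -1⟩, by decide, by decide⟩

/-- The units of `ℤ[i]` are `1`, `i`, `-1`, `-i`, so statements about them are decidable. -/
instance : Fintype GaussianIntˣ where
  elems := {1, gaussianI, -1, -gaussianI}
  complete u := by
    have hu : u.val.norm = 1 := (Zsqrtd.norm_eq_one_iff' (by norm_num) _).2 u.isUnit
    obtain ⟨⟨a, b⟩, v, h1, h2⟩ := u
    have hu' : a * a + b * b = 1 := by simpa [Zsqrtd.norm_def] using hu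
    obtain ⟨ha, ha'⟩ : -1 ≤ a ∧ a ≤ 1 := by constructor <;> nlinarith
    obtain ⟨hb, hb'⟩ : -1 ≤ b ∧ b ≤ 1 := by constructor <;> nlinarith
    simp only [Finset.mem_insert, Finset.mem_singleton, Units.ext_iff, gaussianI, Zsqrtd.ext_iff]
    interval_cases a <;> interval_cases b <;> simp_all

/-- The vector `2u eⱼ`. -/
def axisVector (j : Fin 4) (u : GaussianIntˣ) : Fin 4 → GaussianInt := Pi.single j (2 * u)

/-- The vector with coordinates the units `u`. -/
def unitVector (u : Fin 4 → GaussianIntˣ) : Fin 4 → GaussianInt := fun j ↦ u j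

/-- The `80` vectors of norm `4` making up five orthogonal frames, on which `G₂₉` acts after a
change of coordinates: the axis vectors, and the vectors of units with product `1`. -/
def frameVectors : Finset (Fin 4 → GaussianInt) :=
  ({u | ∏ j, u j = 1} : Finset (Fin 4 → GaussianIntˣ)).image unitVector ∪
    Finset.univ.image fun p : Fin 4 × GaussianIntˣ ↦ axisVector p.1 p.2

theorem card_frameVectors : frameVectors.card = 80 := by decide +kernel

theorem mem_frameVectors {v : Fin 4 → GaussianInt} :
    v ∈ frameVectors ↔ (∃ u, ∏ j, u j = 1 ∧ unitVector u = v) ∨ ∃ j u, axisVector j u = v := by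
  simp [frameVectors]

theorem axisVector_mem_frameVectors (j : Fin 4) (u : GaussianIntˣ) :
    axisVector j u ∈ frameVectors :=
  mem_frameVectors.2 (Or.inr ⟨j, u, rfl⟩)

theorem axisVector_injective :
    Function.Injective fun p : Fin 4 × GaussianIntˣ ↦ axisVector p.1 p.2 := by decide +kernel

theorem axisVector_apply_eq_zero_iff {j k : Fin 4} {u : GaussianIntˣ} :
    axisVector j u k = 0 ↔ k ≠ j := by
  simp [axisVector, Pi.single_apply]

theorem unitVector_injective : Function.Injective unitVector :=
  fun _ _ h ↦ funext fun j ↦ Units.ext (congrFun h j)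

theorem unitVector_apply_ne_zero (u : Fin 4 → GaussianIntˣ) (j : Fin 4) : unitVector u j ≠ 0 :=
  (u j).ne_zero

theorem prod_eq_one_of_unitVector_mem {u : Fin 4 → GaussianIntˣ}
    (hu : unitVector u ∈ frameVectors) : ∏ j, u j = 1 := by
  obtain ⟨u', hu', h⟩ | ⟨j, a, h⟩ := mem_frameVectors.1 hu
  · rwa [← unitVector_injective h]
  · obtain ⟨k, hk⟩ := exists_ne j
    exact absurd (congrFun h.symm k ▸ axisVector_apply_eq_zero_iff.2 hk)
      (unitVector_apply_ne_zero u k)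

theorem exists_eq_axisVector_of_apply_eq_zero {v : Fin 4 → GaussianInt} (hv : v ∈ frameVectors)
    {m : Fin 4} (hm : v m = 0) : ∃ j u, axisVector j u = v := by
  obtain ⟨u, -, rfl⟩ | h := mem_frameVectors.1 hv
  · exact absurd hm (unitVector_apply_ne_zero u m)
  · exact h

theorem diagonalGL_smul_unitVector (d u : Fin 4 → GaussianIntˣ) :
    diagonalGL d • unitVector u = unitVector (d * u) := by
  rw [diagonalGL_smul]
  ext1 j
  exact (Units.val_mul _ _).symm

theorem diagonalGL_smul_axisVector (d : Fin 4 → GaussianIntˣ) (j : Fin 4) (u : GaussianIntˣ) :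
    diagonalGL d • axisVector j u = axisVector j (d j * u) := by
  rw [diagonalGL_smul]
  ext1 k
  obtain rfl | hk := eq_or_ne k j
  · simp [axisVector, mul_left_comm]
  · simp [axisVector, hk]

theorem permGL_smul_axisVector (σ : Equiv.Perm (Fin 4)) (j : Fin 4) (u : GaussianIntˣ) :
    (permGL σ : GL (Fin 4) GaussianInt) • axisVector j u = axisVector (σ j) u := by
  rw [permGL_smul, axisVector, Pi.single_comp_equiv]
  rfl

theorem diagonalGL_smul_mem_frameVectors {d : Fin 4 → GaussianIntˣ} (hd : ∏ j, d j = 1)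
    {v : Fin 4 → GaussianInt} (hv : v ∈ frameVectors) : diagonalGL d • v ∈ frameVectors := by
  rw [mem_frameVectors]
  obtain ⟨u, hu, rfl⟩ | ⟨j, u, rfl⟩ := mem_frameVectors.1 hv
  · exact Or.inl ⟨d * u, by simp only [Pi.mul_apply, Finset.prod_mul_distrib, hd, hu, mul_one],
      (diagonalGL_smul_unitVector d u).symm⟩
  · exact Or.inr ⟨j, d j * u, (diagonalGL_smul_axisVector d j u).symm⟩

theorem permGL_smul_mem_frameVectors (σ : Equiv.Perm (Fin 4)) {v : Fin 4 → GaussianInt}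
    (hv : v ∈ frameVectors) : (permGL σ : GL (Fin 4) GaussianInt) • v ∈ frameVectors := by
  rw [mem_frameVectors]
  obtain ⟨u, hu, rfl⟩ | ⟨j, u, rfl⟩ := mem_frameVectors.1 hv
  · exact Or.inl ⟨u ∘ ⇑σ⁻¹, (Equiv.prod_comp σ⁻¹ u).trans hu, (permGL_smul σ (unitVector u)).symm⟩
  · exact Or.inr ⟨σ j, u, (permGL_smul_axisVector σ j u).symm⟩

/-- A vector over `ℤ[i]`, viewed in `ℂ⁴`. -/
noncomputable def embed (v : Fin 4 → GaussianInt) : Fin 4 → ℂ := GaussianInt.toComplex ∘ v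

theorem embed_injective : Function.Injective embed :=
  GaussianInt.toComplex_injective.comp_left

theorem map_smul_embed (g : GL (Fin 4) GaussianInt) (v : Fin 4 → GaussianInt) :
    GeneralLinearGroup.map GaussianInt.toComplex g • embed v = embed (g • v) :=
  map_smul_comp _ g v

theorem embed_axisVector_one (j : Fin 4) : embed (axisVector j 1) = (2 : ℂ) • Pi.single j 1 := by
  ext1 k
  obtain rfl | hk := eq_or_ne k j
  · simp [embed, axisVector, map_ofNat]
  · simp [embed, axisVector, hk]

theorem eq_of_forall_smul_axisVector_eq {g h : GL (Fin 4) ℂ}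
    (hgh : ∀ j, g • embed (axisVector j 1) = h • embed (axisVector j 1)) : g = h := by
  refine Units.ext (Matrix.ext_of_mulVec_single fun j ↦ ?_)
  have hj := hgh j
  rw [smul_eq_mulVec, smul_eq_mulVec, embed_axisVector_one,
    mulVec_smul, mulVec_smul] at hj
  exact smul_right_injective _ two_ne_zero hj

end FrameVectors

section FrameGroup

/-- Roots of the reflections `s₁`, `s₂`, `s₃`, `s₄`. -/
noncomputable def root : Fin 4 → Fin 4 → ℂ :=
  ![![0, 0, 0, 1], ![1, -1, I, I], ![1, -1, 0, 0], ![0, 1, -1, 0]]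

/-- The reflection in `(1, 1, 1, 1)`, conjugation by which takes `G₂₉` to a group acting on
`frameVectors`. -/
noncomputable def frameChange : GL (Fin 4) ℂ := reflection 1

/-- The roots in frame coordinates. -/
noncomputable def frameRoot : Fin 4 → Fin 4 → ℂ :=
  ![![1, 1, 1, -1], Pi.single 0 1 - I • Pi.single 1 1, Pi.single 0 1 - Pi.single 1 1,
    Pi.single 1 1 - Pi.single 2 1]

/-- The group `G₂₉` in frame coordinates. -/
noncomputable def frameGroup : Subgroup (GL (Fin 4) ℂ) :=
  Subgroup.closure (Set.range fun k ↦ reflection (frameRoot k))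

theorem coe_reflection_root (k : Fin 4) :
    (reflection (root k) : Matrix (Fin 4) (Fin 4) ℂ) = ![s1, s2, s3, s4] k := by
  rw [coe_reflection]
  fin_cases k <;> ext i j <;> fin_cases i <;> fin_cases j <;>
    simp [root, s1, s2, s3, s4, vecMulVec, dotProduct, Fin.sum_univ_succ] <;> norm_num

theorem frameChange_smul (v : Fin 4 → ℂ) :
    frameChange • v = v - ((v 0 + v 1 + v 2 + v 3) / 2) • (1 : Fin 4 → ℂ) := by
  have hnorm : star (1 : Fin 4 → ℂ) ⬝ᵥ 1 = 4 := by simp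
  rw [frameChange, reflection_smul, hnorm, star_one, one_dotProduct, Fin.sum_univ_four]
  congr 2
  ring

theorem exists_frameChange_smul_frameRoot_eq (k : Fin 4) :
    ∃ c : ℂ, c ≠ 0 ∧ frameChange • frameRoot k = c • root k := by
  simp only [frameChange_smul]
  fin_cases k
  · refine ⟨-2, by norm_num, ?_⟩
    ext j
    fin_cases j <;> simp [frameRoot, root]
    norm_num
  · refine ⟨(1 + I) / 2, fun h ↦ by simpa using congrArg Complex.re h, ?_⟩
    ext j
    fin_cases j <;> simp [frameRoot, root] <;> grind [I_mul_I]
  all_goals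
    refine ⟨1, one_ne_zero, ?_⟩
    ext j
    fin_cases j <;> simp [frameRoot, root]

theorem G29_eq_closure_range_reflection_root :
    G29 = Subgroup.closure (Set.range fun k ↦ reflection (root k)) := by
  unfold G29
  congr 1
  ext g
  simp only [Set.mem_ofPred_eq, Set.mem_range, Units.ext_iff, coe_reflection_root,
    Fin.exists_fin_succ]
  simp [eq_comm]

theorem map_conj_frameChange_frameGroup :
    frameGroup.map (MulAut.conj frameChange).toMonoidHom = G29 := by
  rw [frameGroup, MonoidHom.map_closure, ← Set.range_comp, G29_eq_closure_range_reflection_root]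
  congr 2
  ext1 k
  obtain ⟨c, hc, hroot⟩ := exists_frameChange_smul_frameRoot_eq k
  change MulAut.conj frameChange (reflection (frameRoot k)) = _
  rw [conj_reflection (g := frameChange) (reflection_mem_unitaryGroup 1), hroot,
    reflection_smul_root hc]

theorem card_G29_eq_card_frameGroup : Nat.card G29 = Nat.card frameGroup := by
  rw [← map_conj_frameChange_frameGroup,
    Subgroup.card_map_of_injective (MulAut.conj frameChange).injective]

theorem frameGroup_le_unitaryGroup : frameGroup ≤ (unitaryGroup (Fin 4) ℂ).units :=
  (Subgroup.closure_le _).2 (Set.range_subset_iff.2 fun _ ↦ reflection_mem_unitaryGroup _)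

theorem reflection_frameRoot_mem (k : Fin 4) : reflection (frameRoot k) ∈ frameGroup :=
  Subgroup.subset_closure (Set.mem_range_self k)

theorem map_diagonalGL_mul_permGL_swap {j k : Fin 4} (hjk : j ≠ k) (u : GaussianIntˣ) :
    GeneralLinearGroup.map GaussianInt.toComplex
        (diagonalGL (Pi.mulSingle k u / Pi.mulSingle j u) * permGL (Equiv.swap j k)) =
      reflection (Pi.single j 1 - GaussianInt.toComplex u • Pi.single k 1) := by
  have hu : star (GaussianInt.toComplex u) * GaussianInt.toComplex u = 1 := by
    have hu : star (u : GaussianInt) * u = 1 := by revert u; decide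
    rw [← map_one GaussianInt.toComplex, ← hu, map_mul]
    simp
  let f : GaussianIntˣ →* ℂˣ := Units.map (GaussianInt.toComplex : GaussianInt →* ℂ)
  refine Eq.trans ?_ (reflection_single_sub_smul_single hjk (u := f u) hu).symm
  rw [map_mul, map_diagonalGL, map_permGL]
  congr 2
  ext1 l
  have hsingle (m : Fin 4) : f ((Pi.mulSingle m u : Fin 4 → GaussianIntˣ) l) =
      (Pi.mulSingle m (f u) : Fin 4 → ℂˣ) l :=
    Pi.apply_mulSingle (fun _ ↦ f) (fun _ ↦ map_one f) m u l
  exact (map_div f _ _).trans (congrArg₂ _ (hsingle k) (hsingle j))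

theorem map_permGL_swap {j k : Fin 4} (hjk : j ≠ k) :
    GeneralLinearGroup.map GaussianInt.toComplex (permGL (Equiv.swap j k)) =
      reflection (Pi.single j 1 - Pi.single k 1) := by
  have h := map_diagonalGL_mul_permGL_swap hjk 1
  rwa [Pi.mulSingle_one, Pi.mulSingle_one, div_one, map_one, one_mul, Units.val_one, map_one,
    one_smul] at h

theorem toComplex_gaussianI : GaussianInt.toComplex gaussianI = I := by
  simp [GaussianInt.toComplex_def, gaussianI]

end FrameGroup

section Invariance

/-- The image of `frameVectors` in `ℂ⁴`. -/
noncomputable def frames : Set (Fin 4 → ℂ) := embed '' frameVectors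

theorem ncard_frames : frames.ncard = 80 := by
  rw [frames, Set.ncard_image_of_injective _ embed_injective, Set.ncard_coe_finset,
    card_frameVectors]

theorem exists_two_mul_eq_of_mem_frameVectors : ∀ v ∈ frameVectors, ∃ w ∈ frameVectors,
    ∀ j : Fin 4, 2 * w j = 2 * v j - (v 0 + v 1 + v 2 - v 3) * ![1, 1, 1, -1] j := by
  decide +kernel

theorem reflection_frameRoot_zero_smul (v : Fin 4 → ℂ) :
    reflection (frameRoot 0) • v = v - ((v 0 + v 1 + v 2 - v 3) / 2) • ![1, 1, 1, -1] := by
  have hnorm : star (frameRoot 0) ⬝ᵥ frameRoot 0 = 4 := by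
    simp [frameRoot, dotProduct, Fin.sum_univ_four]
    norm_num
  have hinner : star (frameRoot 0) ⬝ᵥ v = v 0 + v 1 + v 2 - v 3 := by
    simp [frameRoot, dotProduct, Fin.sum_univ_four, sub_eq_add_neg]
  rw [reflection_smul, hnorm, hinner]
  congr 1
  change _ • ![1, 1, 1, -1] = _
  congr 1
  ring

theorem reflection_frameRoot_zero_smul_mem_frames {v : Fin 4 → GaussianInt}
    (hv : v ∈ frameVectors) : reflection (frameRoot 0) • embed v ∈ frames := by
  obtain ⟨w, hw, hvw⟩ := exists_two_mul_eq_of_mem_frameVectors v hv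
  refine ⟨w, hw, ?_⟩
  ext1 j
  have hj := congrArg GaussianInt.toComplex (hvw j)
  have hroot : GaussianInt.toComplex (![1, 1, 1, -1] j) = ![1, 1, 1, -1] j := by
    fin_cases j <;> simp
  rw [map_mul, map_sub, map_mul, map_mul, map_sub, map_add, map_add, map_ofNat, hroot] at hj
  rw [reflection_frameRoot_zero_smul]
  simp only [embed, Function.comp_apply, Pi.sub_apply, Pi.smul_apply, smul_eq_mul]
  linear_combination hj / 2

theorem map_smul_mem_frames {g : GL (Fin 4) GaussianInt}
    (hg : ∀ v ∈ frameVectors, g • v ∈ frameVectors) {v : Fin 4 → GaussianInt}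
    (hv : v ∈ frameVectors) :
    GeneralLinearGroup.map GaussianInt.toComplex g • embed v ∈ frames :=
  ⟨g • v, hg v hv, (map_smul_embed g v).symm⟩

theorem reflection_frameRoot_smul_mem_frames (k : Fin 4) {v : Fin 4 → GaussianInt}
    (hv : v ∈ frameVectors) : reflection (frameRoot k) • embed v ∈ frames := by
  fin_cases k
  · exact reflection_frameRoot_zero_smul_mem_frames hv
  · have h := map_diagonalGL_mul_permGL_swap (j := 0) (k := 1) (by decide) gaussianI
    rw [toComplex_gaussianI] at h
    change reflection (Pi.single 0 1 - I • Pi.single 1 1) • _ ∈ _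
    rw [← h]
    refine map_smul_mem_frames (fun v hv ↦ ?_) hv
    rw [SemigroupAction.mul_smul]
    exact diagonalGL_smul_mem_frameVectors (by decide) (permGL_smul_mem_frameVectors _ hv)
  · change reflection (Pi.single 0 1 - Pi.single 1 1) • _ ∈ _
    rw [← map_permGL_swap (by decide)]
    exact map_smul_mem_frames (fun v hv ↦ permGL_smul_mem_frameVectors _ hv) hv
  · change reflection (Pi.single 1 1 - Pi.single 2 1) • _ ∈ _
    rw [← map_permGL_swap (by decide)]
    exact map_smul_mem_frames (fun v hv ↦ permGL_smul_mem_frameVectors _ hv) hv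

open scoped Pointwise in
theorem frameGroup_le_stabilizer_frames :
    frameGroup ≤ MulAction.stabilizer (GL (Fin 4) ℂ) frames := by
  refine (Subgroup.closure_le _).2 (Set.range_subset_iff.2 fun k ↦ ?_)
  rw [SetLike.mem_coe,
    MulAction.mem_stabilizer_set' (s := frames) (frameVectors.finite_toSet.image embed)]
  rintro _ ⟨v, hv, rfl⟩
  exact reflection_frameRoot_smul_mem_frames k hv

open scoped Pointwise in
theorem smul_mem_frames {g : GL (Fin 4) ℂ} (hg : g ∈ frameGroup) {x : Fin 4 → ℂ}
    (hx : x ∈ frames) : g • x ∈ frames := by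
  rw [← MulAction.mem_stabilizer_iff.1 (frameGroup_le_stabilizer_frames hg)]
  exact Set.smul_mem_smul_set hx

end Invariance

section Monomials

/-- The elements of `frameGroup` with entries in `ℤ[i]`. -/
noncomputable def integralGroup : Subgroup (GL (Fin 4) GaussianInt) :=
  frameGroup.comap (GeneralLinearGroup.map GaussianInt.toComplex)

theorem mem_integralGroup {g : GL (Fin 4) GaussianInt} :
    g ∈ integralGroup ↔ GeneralLinearGroup.map GaussianInt.toComplex g ∈ frameGroup := Iff.rfl

theorem permGL_swap_zero_one_mem : permGL (Equiv.swap 0 1) ∈ integralGroup := by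
  rw [mem_integralGroup, map_permGL_swap (by decide)]
  exact reflection_frameRoot_mem 2

theorem permGL_swap_one_two_mem : permGL (Equiv.swap 1 2) ∈ integralGroup := by
  rw [mem_integralGroup, map_permGL_swap (by decide)]
  exact reflection_frameRoot_mem 3

theorem diagonalGL_mulSingle_one_div_zero_mem :
    diagonalGL (Pi.mulSingle 1 gaussianI / Pi.mulSingle 0 gaussianI) ∈ integralGroup := by
  rw [← integralGroup.mul_mem_cancel_right permGL_swap_zero_one_mem, mem_integralGroup,
    map_diagonalGL_mul_permGL_swap (by decide), toComplex_gaussianI]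
  exact reflection_frameRoot_mem 1

theorem diagonalGL_mulSingle_two_div_zero_mem :
    diagonalGL (Pi.mulSingle 2 gaussianI / Pi.mulSingle 0 gaussianI) ∈ integralGroup := by
  have h := diagonalGL_mulSingle_div_mem permGL_swap_one_two_mem
    diagonalGL_mulSingle_one_div_zero_mem
  rwa [Equiv.swap_apply_left, Equiv.swap_apply_of_ne_of_ne (by decide) (by decide)] at h

theorem diagonalGL_mulSingle_two_div_one_mem :
    diagonalGL (Pi.mulSingle 2 gaussianI / Pi.mulSingle 1 gaussianI) ∈ integralGroup := by
  have h := diagonalGL_mulSingle_div_mem permGL_swap_zero_one_mem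
    diagonalGL_mulSingle_two_div_zero_mem
  rwa [Equiv.swap_apply_left, Equiv.swap_apply_of_ne_of_ne (by decide) (by decide)] at h

theorem exists_mem_frameGroup_smul_frameRoot_zero_eq :
    ∃ g ∈ frameGroup, g • frameRoot 0 = (1 - I) • (Pi.single 2 1 - Pi.single 3 1) := by
  let φ : GL (Fin 4) GaussianInt →* GL (Fin 4) ℂ := GeneralLinearGroup.map GaussianInt.toComplex
  -- `d` is chosen so that the reflected vector is supported on the last two coordinates, and `d'`
  -- corrects their phases.
  let d : GL (Fin 4) GaussianInt := diagonalGL ![gaussianI, gaussianI, -1, 1]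
  let d' : GL (Fin 4) GaussianInt := diagonalGL ![-gaussianI, 1, gaussianI, 1]
  have hd' : d' ∈ integralGroup := by
    convert diagonalGL_mulSingle_two_div_zero_mem using 2
    decide
  have hd : d ∈ integralGroup := by
    have h := inv_mem (mul_mem diagonalGL_mulSingle_two_div_zero_mem
      diagonalGL_mulSingle_two_div_one_mem)
    rw [← map_mul, ← map_inv] at h
    convert h using 2
    decide
  have hroot : frameRoot 0 = embed ![1, 1, 1, -1] := by
    ext j
    fin_cases j <;> simp [frameRoot, embed]
  have hd_smul : d • ![1, 1, 1, -1] = (![⟨0, 1⟩, ⟨0, 1⟩, -1, -1] : Fin 4 → GaussianInt) := by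
    rw [diagonalGL_smul]
    decide
  have hrefl_smul : reflection (frameRoot 0) • embed ![⟨0, 1⟩, ⟨0, 1⟩, -1, -1] =
      embed ![0, 0, ⟨-1, -1⟩, ⟨-1, 1⟩] := by
    rw [reflection_frameRoot_zero_smul]
    ext j
    fin_cases j <;> simp [embed, GaussianInt.toComplex_def]
    ring
  have hd'_smul : d' • ![0, 0, ⟨-1, -1⟩, ⟨-1, 1⟩] =
      (![0, 0, ⟨1, -1⟩, ⟨-1, 1⟩] : Fin 4 → GaussianInt) := by
    rw [diagonalGL_smul]
    decide
  refine ⟨φ d' * reflection (frameRoot 0) * φ d,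
    mul_mem (mul_mem hd' (reflection_frameRoot_mem 0)) hd, ?_⟩
  rw [SemigroupAction.mul_smul, SemigroupAction.mul_smul, hroot, map_smul_embed, hd_smul,
    ← hroot, hrefl_smul, map_smul_embed, hd'_smul]
  ext j
  fin_cases j <;> simp [embed, GaussianInt.toComplex_def] <;> ring

theorem permGL_swap_two_three_mem : permGL (Equiv.swap 2 3) ∈ integralGroup := by
  obtain ⟨g, hg, hroot⟩ := exists_mem_frameGroup_smul_frameRoot_zero_eq
  have hne : (1 - I : ℂ) ≠ 0 := fun h ↦ by simpa using congrArg Complex.re h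
  rw [mem_integralGroup, map_permGL_swap (by decide), ← reflection_smul_root hne, ← hroot,
    ← conj_reflection (frameGroup_le_unitaryGroup hg), MulAut.conj_apply]
  exact mul_mem (mul_mem hg (reflection_frameRoot_mem 0)) (inv_mem hg)

theorem permGL_mem_integralGroup (σ : Equiv.Perm (Fin 4)) : permGL σ ∈ integralGroup := by
  have hle : Submonoid.closure (Set.range fun i : Fin 3 ↦ Equiv.swap i.castSucc i.succ) ≤
      (integralGroup.comap permGL).toSubmonoid := by
    rw [Submonoid.closure_le, Set.range_subset_iff]
    intro i
    fin_cases i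
    exacts [permGL_swap_zero_one_mem, permGL_swap_one_two_mem, permGL_swap_two_three_mem]
  rw [Equiv.Perm.mclosure_swap_castSucc_succ] at hle
  exact hle (Submonoid.mem_top σ)

theorem diagonalGL_mem_integralGroup {d : Fin 4 → GaussianIntˣ} (hd : ∏ j, d j = 1) :
    diagonalGL d ∈ integralGroup := by
  have hperm : ∀ j k : Fin 4, j ≠ k → ∃ σ : Equiv.Perm (Fin 4), σ 1 = j ∧ σ 0 = k := by decide
  have hpow : ∀ u, ∃ m : Fin 4, gaussianI ^ (m : ℕ) = u := by decide
  have hsingle (j k : Fin 4) (u : GaussianIntˣ) (hjk : j ≠ k) :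
      (Pi.mulSingle j u / Pi.mulSingle k u : Fin 4 → GaussianIntˣ) ∈
        integralGroup.comap diagonalGL := by
    obtain ⟨σ, rfl, rfl⟩ := hperm j k hjk
    obtain ⟨m, rfl⟩ := hpow u
    rw [Pi.mulSingle_pow, Pi.mulSingle_pow, ← div_pow]
    exact pow_mem (Subgroup.mem_comap.2 (diagonalGL_mulSingle_div_mem (permGL_mem_integralGroup σ)
      diagonalGL_mulSingle_one_div_zero_mem)) _
  exact mem_of_prod_eq_one hsingle hd

theorem diagonalGL_mem_integralGroup_iff {d : Fin 4 → GaussianIntˣ} :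
    diagonalGL d ∈ integralGroup ↔ ∏ j, d j = 1 := by
  refine ⟨fun hd ↦ ?_, diagonalGL_mem_integralGroup⟩
  have hone : unitVector 1 ∈ frameVectors := mem_frameVectors.2 (Or.inl ⟨1, by simp, rfl⟩)
  have hmem := smul_mem_frames hd (Set.mem_image_of_mem embed hone)
  rw [map_smul_embed, diagonalGL_smul_unitVector, mul_one, frames,
    embed_injective.mem_set_image] at hmem
  exact prod_eq_one_of_unitVector_mem hmem

end Monomials

section Stabilizers

/-- The subgroup of `frameGroup` fixing the coordinate axes in `F` pointwise. -/
noncomputable def fixer (F : Finset (Fin 4)) : Subgroup (GL (Fin 4) ℂ) :=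
  frameGroup ⊓ fixingSubgroup (GL (Fin 4) ℂ) ((fun j ↦ embed (axisVector j 1)) '' F)

variable {F : Finset (Fin 4)} {g : GL (Fin 4) ℂ} {j l : Fin 4}

theorem mem_fixer : g ∈ fixer F ↔ g ∈ frameGroup ∧
    ∀ m ∈ F, g • embed (axisVector m 1) = embed (axisVector m 1) := by
  simp [fixer, mem_fixingSubgroup_iff]

theorem fixer_empty : fixer ∅ = frameGroup := by
  simp [fixer]

theorem fixer_insert (j : Fin 4) (F : Finset (Fin 4)) : fixer (insert j F) =
    fixer F ⊓ MulAction.stabilizer (GL (Fin 4) ℂ) (embed (axisVector j 1)) := by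
  ext g
  simp only [Subgroup.mem_inf, mem_fixer, Finset.forall_mem_insert, MulAction.mem_stabilizer_iff]
  tauto

theorem exists_mem_fixer_smul_axisVector_eq (hF : 1 < Fᶜ.card) (hj : j ∉ F) (hl : l ∉ F)
    (u : GaussianIntˣ) :
    ∃ g ∈ fixer F, g • embed (axisVector j 1) = embed (axisVector l u) := by
  obtain ⟨k, hk, hkl⟩ := Finset.exists_mem_ne hF l
  rw [Finset.mem_compl] at hk
  let d : Fin 4 → GaussianIntˣ := Pi.mulSingle l u / Pi.mulSingle k u
  have hd : ∏ m, d m = 1 := by simp [d]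
  have hact (m : Fin 4) : (GeneralLinearGroup.map GaussianInt.toComplex
      (diagonalGL d * permGL (Equiv.swap j l))) • embed (axisVector m 1) =
        embed (axisVector (Equiv.swap j l m) (d (Equiv.swap j l m))) := by
    rw [map_smul_embed, SemigroupAction.mul_smul, permGL_smul_axisVector,
      diagonalGL_smul_axisVector, mul_one]
  refine ⟨_, mem_fixer.2 ⟨mem_integralGroup.1 (mul_mem (diagonalGL_mem_integralGroup hd)
    (permGL_mem_integralGroup (Equiv.swap j l))), fun m hm ↦ ?_⟩, ?_⟩
  · have hmj : m ≠ j := ne_of_mem_of_not_mem hm hj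
    have hml : m ≠ l := ne_of_mem_of_not_mem hm hl
    have hmk : m ≠ k := ne_of_mem_of_not_mem hm hk
    rw [hact, Equiv.swap_apply_of_ne_of_ne hmj hml]
    simp [d, hml, hmk]
  · rw [hact, Equiv.swap_apply_left]
    simp [d, hkl.symm]

theorem orbit_frameGroup_axisVector :
    MulAction.orbit frameGroup (embed (axisVector 3 1)) = frames := by
  refine Set.Subset.antisymm ?_ ?_
  · rintro _ ⟨g, rfl⟩
    exact smul_mem_frames g.2 (Set.mem_image_of_mem embed (axisVector_mem_frameVectors 3 1))
  have hone : reflection (frameRoot 0) • embed (axisVector 3 1) = embed (unitVector 1) := by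
    rw [reflection_frameRoot_zero_smul]
    ext j
    fin_cases j <;> simp [embed, axisVector, unitVector, map_ofNat]
    norm_num
  rintro _ ⟨v, hv, rfl⟩
  obtain ⟨u, hu, rfl⟩ | ⟨j, u, rfl⟩ := mem_frameVectors.1 hv
  · refine ⟨⟨_, mul_mem (diagonalGL_mem_integralGroup hu) (reflection_frameRoot_mem 0)⟩, ?_⟩
    change (_ * _ : GL (Fin 4) ℂ) • embed _ = _
    rw [SemigroupAction.mul_smul, hone, map_smul_embed, diagonalGL_smul_unitVector, mul_one]
  · obtain ⟨g, hg, hgu⟩ := exists_mem_fixer_smul_axisVector_eq (F := ∅) (j := 3) (l := j)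
      (by decide) (Finset.notMem_empty _) (Finset.notMem_empty _) u
    exact ⟨⟨g, fixer_empty ▸ hg⟩, hgu⟩

theorem exists_axisVector_eq_smul_of_mem_fixer (hF : F.Nonempty) (hj : j ∉ F) (hg : g ∈ fixer F) :
    ∃ l ∉ F, ∃ u, embed (axisVector l u) = g • embed (axisVector j 1) := by
  obtain ⟨hgG, hfix⟩ := mem_fixer.1 hg
  obtain ⟨v, hv, hgv⟩ := smul_mem_frames hgG
    (Set.mem_image_of_mem embed (axisVector_mem_frameVectors j 1))
  have horth (m : Fin 4) (hm : m ∈ F) : v m = 0 := by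
    have h := star_smul_dotProduct_smul (frameGroup_le_unitaryGroup hgG) (embed (axisVector m 1))
      (embed (axisVector j 1))
    have hmj : m ≠ j := ne_of_mem_of_not_mem hm hj
    rw [hfix m hm, ← hgv] at h
    rw [embed_axisVector_one, embed_axisVector_one] at h
    simpa [hmj, embed] using h
  obtain ⟨m, hm⟩ := hF
  obtain ⟨l, u, rfl⟩ := exists_eq_axisVector_of_apply_eq_zero hv (horth m hm)
  exact ⟨l, fun hl ↦ axisVector_apply_eq_zero_iff.1 (horth l hl) rfl, u, hgv⟩

theorem orbit_fixer_axisVector (hF : F.Nonempty) (hF' : 1 < Fᶜ.card) (hj : j ∉ F) :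
    MulAction.orbit (fixer F) (embed (axisVector j 1)) =
      (fun p : Fin 4 × GaussianIntˣ ↦ embed (axisVector p.1 p.2)) ''
        ↑(Fᶜ ×ˢ (Finset.univ : Finset GaussianIntˣ)) := by
  refine Set.Subset.antisymm ?_ ?_
  · rintro _ ⟨⟨g, hg⟩, rfl⟩
    obtain ⟨l, hl, u, h⟩ := exists_axisVector_eq_smul_of_mem_fixer hF hj hg
    exact ⟨(l, u), by simpa using hl, h⟩
  · rintro _ ⟨⟨l, u⟩, hl, rfl⟩
    obtain ⟨g, hg, h⟩ := exists_mem_fixer_smul_axisVector_eq hF' hj (by simpa using hl) u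
    exact ⟨⟨g, hg⟩, h⟩

theorem card_fixer_eq_mul_card_fixer_insert (hF : F.Nonempty) (hF' : 1 < Fᶜ.card) (hj : j ∉ F) :
    Nat.card (fixer F) = Fᶜ.card * 4 * Nat.card (fixer (insert j F)) := by
  have hunits : Fintype.card GaussianIntˣ = 4 := rfl
  have hinj : Function.Injective fun p : Fin 4 × GaussianIntˣ ↦ embed (axisVector p.1 p.2) :=
    embed_injective.comp axisVector_injective
  rw [card_eq_ncard_orbit_mul_card_stabilizer (fixer F) (embed (axisVector j 1)),
    orbit_fixer_axisVector hF hF' hj, ← fixer_insert, Set.ncard_image_of_injective _ hinj,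
    Set.ncard_coe_finset, Finset.card_product, Finset.card_univ, hunits]

theorem fixer_compl_singleton (j : Fin 4) : fixer {j}ᶜ = ⊥ := by
  rw [eq_bot_iff]
  intro g hg
  obtain ⟨l, hl, u, hu⟩ := exists_axisVector_eq_smul_of_mem_fixer (F := {j}ᶜ) (j := j)
    ((exists_ne j).imp fun _ ↦ by simp) (by simp) hg
  obtain rfl : l = j := by simpa using hl
  obtain ⟨hgG, hfix⟩ := mem_fixer.1 hg
  have hdiag :
      g = GeneralLinearGroup.map GaussianInt.toComplex (diagonalGL (Pi.mulSingle l u)) := by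
    refine eq_of_forall_smul_axisVector_eq fun m ↦ ?_
    rw [map_smul_embed, diagonalGL_smul_axisVector, mul_one]
    obtain rfl | hm := eq_or_ne m l
    · rw [Pi.mulSingle_eq_same, hu]
    · rw [Pi.mulSingle_eq_of_ne hm, hfix m (by simpa using hm)]
  have hu1 : u = 1 := by
    rw [hdiag] at hgG
    simpa using diagonalGL_mem_integralGroup_iff.1 hgG
  rw [hdiag, hu1, Pi.mulSingle_one, map_one, map_one]
  exact one_mem _

theorem card_frameGroup_eq_mul_card_fixer : Nat.card frameGroup = 80 * Nat.card (fixer {3}) := by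
  rw [card_eq_ncard_orbit_mul_card_stabilizer frameGroup (embed (axisVector 3 1)),
    orbit_frameGroup_axisVector, ncard_frames, ← insert_empty_eq, fixer_insert, fixer_empty]

end Stabilizers

end G29

/-- The group `G₂₉` has order `7680`. -/
theorem stmt_11 : Nat.card G29 = 7680 := by
  have hfixer₃ : Nat.card (G29.fixer {3}) = 12 * Nat.card (G29.fixer {0, 3}) :=
    G29.card_fixer_eq_mul_card_fixer_insert (by decide) (by decide) (by decide)
  have hfixer₀₃ : Nat.card (G29.fixer {0, 3}) = 8 * Nat.card (G29.fixer {1, 0, 3}) :=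
    G29.card_fixer_eq_mul_card_fixer_insert (by decide) (by decide) (by decide)
  have hcompl : ({1, 0, 3} : Finset (Fin 4)) = {2}ᶜ := by decide
  rw [G29.card_G29_eq_card_frameGroup, G29.card_frameGroup_eq_mul_card_fixer, hfixer₃, hfixer₀₃,
    hcompl, G29.fixer_compl_singleton, Subgroup.card_bot]
end

section
/- The group G_BH has order 3840, and its center consists exactly of the two scalar matrices Id and -Id. -/
open Matrix Complex

/-- The generator `t = diag(-1,1,1,1,1,1)` of the Brandhorst–Hashimoto group. -/
def tBH : Matrix (Fin 6) (Fin 6) ℂ :=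
  !![-1,0,0,0,0,0; 0,1,0,0,0,0; 0,0,1,0,0,0; 0,0,0,1,0,0; 0,0,0,0,1,0; 0,0,0,0,0,1]

/-- The generator `u` of the Brandhorst–Hashimoto group. -/
noncomputable def uBH : Matrix (Fin 6) (Fin 6) ℂ :=
  !![I,0,0,0,0,0; 0,0,1,0,0,0; 0,1,0,0,0,0; 0,0,0,-I,0,0; 0,0,0,0,0,1; 0,0,0,0,1,0]

/-- The generator `v` (a permutation matrix) of the Brandhorst–Hashimoto group. -/
def vBH : Matrix (Fin 6) (Fin 6) ℂ :=
  !![0,0,0,0,0,1; 1,0,0,0,0,0; 0,1,0,0,0,0; 0,0,1,0,0,0; 0,0,0,0,1,0; 0,0,0,1,0,0]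

/-- The Brandhorst–Hashimoto group `G_BH`: the subgroup of `GL(6,ℂ)` generated by
`t`, `u` and `v`. -/
noncomputable def GBH : Subgroup (GL (Fin 6) ℂ) :=
  Subgroup.closure
    {g | (↑g : Matrix (Fin 6) (Fin 6) ℂ) ∈ ({tBH, uBH, vBH} : Set (Matrix (Fin 6) (Fin 6) ℂ))}

/-!
Let `ρ` be the principal series representation of `SL(2, 𝔽₅)` attached to a character `χ` of order
`4` of `𝔽₅ˣ`: it is monomial, in a basis indexed by the six points of the projective line, with
entries the values of `χ`. Up to sign changes `u` and `v` are the images under `ρ` of generators of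
`SL(2, 𝔽₅)`, while `t` and its conjugates generate the group `N` of all diagonal sign matrices,
which `ρ` normalises. So `G_BH = N · ρ(SL(2, 𝔽₅))`. As `χ` takes the value `±1` at the scalars `±1`,
`ρ(A)` lies in `N` exactly when `A` is central, and `|G_BH| = |N| · |PSL(2, 𝔽₅)| = 2⁶ · 60`. An
element commuting with `N` fixes every point of the projective line, hence lies in `N`; if it also
commutes with the image of the transitive group `SL(2, 𝔽₅)`, its signs are all equal.
-/

open scoped LinearAlgebra.Projectivization

section CardSup

variable {G G' : Type*} [Group G] [Group G']

theorem relIndex_sup_eq_of_le_normalizer {N H : Subgroup G}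
    (h : H ≤ Subgroup.normalizer (N : Set G)) : N.relIndex (H ⊔ N) = N.relIndex H := by
  have := Subgroup.normal_subgroupOf_of_le_normalizer h
  have := Subgroup.normal_subgroupOf_sup_of_le_normalizer h
  exact (Nat.card_congr (QuotientGroup.quotientInfEquivProdNormalizerQuotient H N h).toEquiv).symm

theorem card_sup_range_of_le_normalizer {N : Subgroup G} {f : G' →* G}
    (h : f.range ≤ Subgroup.normalizer (N : Set G)) :
    Nat.card ↥(f.range ⊔ N) = Nat.card N * (N.comap f).index := by
  rw [Subgroup.index_comap, ← relIndex_sup_eq_of_le_normalizer h, ← Subgroup.relIndex_bot_left,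
    ← Subgroup.relIndex_bot_left, Subgroup.relIndex_mul_relIndex _ _ _ bot_le le_sup_right]

end CardSup

section SignMatrix

variable (ι R : Type*) [Fintype ι] [DecidableEq ι] [CommRing R]

/-- The diagonal matrices with entries `±1`, parametrised by their vectors of signs. -/
def signMatrix : (ι → ℤˣ) →* GL ι R :=
  MonoidHom.toHomUnits
    { toFun := fun s => diagonal fun i => ((s i : ℤ) : R)
      map_one' := by simp
      map_mul' := fun s t => by simp }

variable {ι R}

@[simp]
theorem coe_signMatrix (s : ι → ℤˣ) :
    (signMatrix ι R s : Matrix ι ι R) = diagonal fun i => ((s i : ℤ) : R) := rfl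

theorem coe_signMatrix_const (e : ℤˣ) :
    (signMatrix ι R (Function.const ι e) : Matrix ι ι R) = ((e : ℤ) : R) • 1 := by
  rw [smul_one_eq_diagonal]; rfl

theorem coe_eq_one_or_neg_one_iff_exists_signMatrix_const {M : GL ι R} :
    (M : Matrix ι ι R) = 1 ∨ (M : Matrix ι ι R) = -1 ↔
      ∃ e : ℤˣ, signMatrix ι R (Function.const ι e) = M := by
  simp_rw [Units.ext_iff, coe_signMatrix_const]
  constructor
  · rintro (h | h)
    · exact ⟨1, by simp [h]⟩
    · exact ⟨-1, by simp [h]⟩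
  · rintro ⟨e, he⟩
    rcases Int.units_eq_one_or e with rfl | rfl
    · exact Or.inl (by simpa using he.symm)
    · exact Or.inr (by simpa using he.symm)

variable [NeZero (2 : R)]

theorem signMatrix_injective : Function.Injective (signMatrix ι R) := by
  have hcast : Function.Injective fun e : ℤˣ => ((e : ℤ) : R) := by
    have hneg : (1 : R) ≠ -1 := fun h =>
      two_ne_zero (α := R) (by linear_combination h)
    intro e e' h
    rcases Int.units_eq_one_or e with rfl | rfl <;> rcases Int.units_eq_one_or e' with rfl | rfl <;>
      simp_all [eq_comm]
  intro s t h
  exact hcast.comp_left (diagonal_injective congr(($h : Matrix ι ι R)))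

theorem card_range_signMatrix : Nat.card (signMatrix ι R).range = 2 ^ Fintype.card ι := by
  rw [← Nat.card_congr (MonoidHom.ofInjective signMatrix_injective).toEquiv]
  simp

end SignMatrix

/-- A family of nonzero vectors of `V`, one on each line through the origin. -/
structure ProjectiveTransversal (F V ι : Type*) [Field F] [AddCommGroup V] [Module F V] where
  /-- The chosen vectors. -/
  rep : ι → V
  rep_ne_zero : ∀ i, rep i ≠ 0
  bijective_mk_rep : Function.Bijective fun i => Projectivization.mk F (rep i) (rep_ne_zero i)

namespace ProjectiveTransversal

variable {F V ι : Type*} [Field F] [AddCommGroup V] [Module F V] (T : ProjectiveTransversal F V ι)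

/-- The bijection between the index set of a transversal and the projective space. -/
noncomputable def pointEquiv : ι ≃ ℙ F V := Equiv.ofBijective _ T.bijective_mk_rep

theorem pointEquiv_apply (i : ι) :
    T.pointEquiv i = Projectivization.mk F (T.rep i) (T.rep_ne_zero i) := rfl

section Action

variable (G : Type*) [Group G] [DistribMulAction G V] [SMulCommClass G F V]

/-- The action of `G` on the projective space, transported to the index set of a transversal. -/
noncomputable def permHom : G →* Equiv.Perm ι :=
  T.pointEquiv.symm.permCongrHom.toMonoidHom.comp (MulAction.toPermHom G (ℙ F V))

variable {G}

theorem pointEquiv_permHom (g : G) (j : ι) :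
    T.pointEquiv (T.permHom G g j) = g • T.pointEquiv j := by
  simp [permHom]

theorem permHom_eq_one_iff {g : G} :
    T.permHom G g = 1 ↔ g ∈ (MulAction.toPermHom G (ℙ F V)).ker := by
  simp only [permHom, MonoidHom.mem_ker, MonoidHom.comp_apply, MulEquiv.coe_toMonoidHom,
    EmbeddingLike.map_eq_one_iff]

theorem permHom_apply_eq_iff (g : G) (j k : ι) :
    T.permHom G g j = k ↔ ∃ c : F, c • T.rep k = g • T.rep j := by
  rw [← T.pointEquiv.apply_eq_iff_eq, pointEquiv_permHom, pointEquiv_apply, pointEquiv_apply,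
    Projectivization.smul_mk, Projectivization.mk_eq_mk_iff']

variable (G) in
theorem exists_permHom_apply_eq [MulAction.IsPretransitive G (ℙ F V)] (i j : ι) :
    ∃ g : G, T.permHom G g i = j := by
  obtain ⟨g, hg⟩ := MulAction.exists_smul_eq G (T.pointEquiv i) (T.pointEquiv j)
  exact ⟨g, T.pointEquiv.injective ((T.pointEquiv_permHom g i).trans hg)⟩

/-- The scalar by which `g` differs from the permutation `T.permHom G g` at the `j`-th vector of
the transversal. -/
noncomputable def coeff (g : G) (j : ι) : F := ((T.permHom_apply_eq_iff g j _).1 rfl).choose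

theorem coeff_smul_rep (g : G) (j : ι) :
    T.coeff g j • T.rep (T.permHom G g j) = g • T.rep j :=
  ((T.permHom_apply_eq_iff g j _).1 rfl).choose_spec

variable {T}

theorem coeff_eq_of_smul_rep_eq {g : G} {j k : ι} {c : F} (h : c • T.rep k = g • T.rep j) :
    T.coeff g j = c := by
  obtain rfl := (T.permHom_apply_eq_iff g j k).2 ⟨c, h⟩
  exact smul_left_injective F (T.rep_ne_zero _) ((T.coeff_smul_rep g j).trans h.symm)

variable (T)

theorem coeff_ne_zero (g : G) (j : ι) : T.coeff g j ≠ 0 := fun h => by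
  have hzero := T.coeff_smul_rep g j
  rw [h, zero_smul, eq_comm, smul_eq_zero_iff_eq] at hzero
  exact T.rep_ne_zero j hzero

theorem coeff_one (j : ι) : T.coeff (1 : G) j = 1 :=
  coeff_eq_of_smul_rep_eq (by rw [one_smul, one_smul])

theorem coeff_mul (g h : G) (j : ι) :
    T.coeff (g * h) j = T.coeff g (T.permHom G h j) * T.coeff h j := by
  refine coeff_eq_of_smul_rep_eq (k := T.permHom G g (T.permHom G h j)) ?_
  rw [mul_comm, mul_smul, coeff_smul_rep, ← smul_comm, coeff_smul_rep, mul_smul]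

section MonomialRep

variable {R : Type*} [CommRing R] [Fintype ι] [DecidableEq ι] (χ : MulChar F R)

variable (G) in
/-- The monomial representation attached to a transversal and a multiplicative character `χ`: `g`
acts as the permutation `T.permHom G g` with the scalars `T.coeff g` replaced by their values
under `χ`. It is the representation induced from the stabiliser of a line, on which `χ` is
evaluated at the scalar by which the stabiliser acts on that line. -/
noncomputable def monomialRep : G →* GL ι R :=
  MonoidHom.toHomUnits
    { toFun := fun g => of fun i j => if i = T.permHom G g j then χ (T.coeff g j) else 0
      map_one' := by
        ext i j
        simp [coeff_one, one_apply]
      map_mul' := fun g h => by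
        ext i k
        simp [mul_apply, coeff_mul] }

theorem monomialRep_apply (g : G) (i j : ι) :
    (T.monomialRep G χ g : Matrix ι ι R) i j =
      if i = T.permHom G g j then χ (T.coeff g j) else 0 := rfl

variable {T} in
theorem monomialRep_apply_of_smul_rep_eq {g : G} {j k : ι} {c : F}
    (h : c • T.rep k = g • T.rep j) (i : ι) :
    (T.monomialRep G χ g : Matrix ι ι R) i j = if i = k then χ c else 0 := by
  rw [monomialRep_apply, coeff_eq_of_smul_rep_eq h, (T.permHom_apply_eq_iff g j k).2 ⟨c, h⟩]

theorem monomialRep_mul_signMatrix (g : G) (s : ι → ℤˣ) :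
    T.monomialRep G χ g * signMatrix ι R s =
      signMatrix ι R (s ∘ (T.permHom G g).symm) * T.monomialRep G χ g := by
  ext i j
  simp only [Units.val_mul, coe_signMatrix, mul_diagonal, diagonal_mul, monomialRep_apply]
  split_ifs with hi
  · simp [hi, mul_comm]
  · simp

theorem range_monomialRep_le_normalizer :
    (T.monomialRep G χ).range ≤ Subgroup.normalizer ((signMatrix ι R).range : Set (GL ι R)) := by
  rintro _ ⟨g, rfl⟩
  have : Finite (signMatrix ι R).range := (Set.finite_range (signMatrix ι R)).to_subtype
  refine Subgroup.mem_normalizer_fintype (S := ((signMatrix ι R).range : Set (GL ι R))) ?_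
  rintro _ ⟨s, rfl⟩
  exact ⟨s ∘ (T.permHom G g).symm, by rw [monomialRep_mul_signMatrix, mul_inv_cancel_right]⟩

theorem permHom_eq_one_of_monomialRep_mem [Nontrivial R] {g : G}
    (h : T.monomialRep G χ g ∈ (signMatrix ι R).range) : T.permHom G g = 1 := by
  obtain ⟨s, hs⟩ := h
  refine Equiv.ext fun j => by_contra fun hj : T.permHom G g j ≠ j => ?_
  have hentry := congr(($hs : Matrix ι ι R) (T.permHom G g j) j)
  rw [coe_signMatrix, diagonal_apply_ne _ hj, monomialRep_apply, if_pos rfl] at hentry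
  exact ((isUnit_iff_ne_zero.2 (T.coeff_ne_zero g j)).map χ).ne_zero hentry.symm

end MonomialRep
end Action

section SignExtension

variable {F V ι G R : Type*} [Field F] [AddCommGroup V] [Module F V] [Group G]
  [DistribMulAction G V] [SMulCommClass G F V] [CommRing R] [Fintype ι] [DecidableEq ι]
  (T : ProjectiveTransversal F V ι) (χ : MulChar F R)

variable (G) in
/-- The group of monomial matrices generated by the image of the monomial representation of `G`
and all diagonal matrices with entries `±1`. -/
noncomputable def signExtension : Subgroup (GL ι R) :=
  (T.monomialRep G χ).range ⊔ (signMatrix ι R).range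

theorem signMatrix_mem_signExtension (s : ι → ℤˣ) : signMatrix ι R s ∈ T.signExtension G χ :=
  Subgroup.mem_sup_right ⟨s, rfl⟩

theorem monomialRep_mem_signExtension (g : G) : T.monomialRep G χ g ∈ T.signExtension G χ :=
  Subgroup.mem_sup_left ⟨g, rfl⟩

theorem signExtension_le_normalizer :
    T.signExtension G χ ≤ Subgroup.normalizer ((signMatrix ι R).range : Set (GL ι R)) :=
  sup_le (T.range_monomialRep_le_normalizer χ) Subgroup.le_normalizer

theorem exists_monomialRep_mul_signMatrix_eq {M : GL ι R} (hM : M ∈ T.signExtension G χ) :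
    ∃ g s, T.monomialRep G χ g * signMatrix ι R s = M := by
  rw [signExtension, ← SetLike.mem_coe, Subgroup.coe_mul_of_left_le_normalizer_right _ _
    (T.range_monomialRep_le_normalizer χ)] at hM
  obtain ⟨_, ⟨g, rfl⟩, _, ⟨s, rfl⟩, hgs⟩ := hM
  exact ⟨g, s, hgs⟩

theorem commute_monomialRep_signMatrix_iff [NeZero (2 : R)] {g : G} {s : ι → ℤˣ} :
    Commute (T.monomialRep G χ g) (signMatrix ι R s) ↔ s ∘ (T.permHom G g).symm = s := by
  rw [commute_iff_eq, monomialRep_mul_signMatrix, mul_left_inj, signMatrix_injective.eq_iff]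

theorem permHom_eq_one_of_forall_commute_signMatrix [NeZero (2 : R)] {g : G}
    (h : ∀ s, Commute (T.monomialRep G χ g) (signMatrix ι R s)) : T.permHom G g = 1 := by
  refine Equiv.ext fun i => by_contra fun hi : T.permHom G g i ≠ i => ?_
  have hfix := congrFun ((T.commute_monomialRep_signMatrix_iff χ).1 (h (Pi.mulSingle i (-1))))
    (T.permHom G g i)
  rw [Function.comp_apply, Equiv.symm_apply_apply, Pi.mulSingle_eq_same,
    Pi.mulSingle_eq_of_ne hi] at hfix
  exact absurd hfix (by decide)

theorem range_signMatrix_le_of_mulSingle_mem [MulAction.IsPretransitive G (ℙ F V)]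
    {H : Subgroup (GL ι R)} (hH : H ≤ T.signExtension G χ)
    (hmono : (T.monomialRep G χ).range ≤ H ⊔ (signMatrix ι R).range)
    {i : ι} (hi : signMatrix ι R (Pi.mulSingle i (-1)) ∈ H) : (signMatrix ι R).range ≤ H := by
  have hsingle (j : ι) : signMatrix ι R (Pi.mulSingle j (-1)) ∈ H := by
    obtain ⟨g, rfl⟩ := T.exists_permHom_apply_eq G i j
    have hg := hmono ⟨g, rfl⟩
    rw [← SetLike.mem_coe, Subgroup.coe_mul_of_left_le_normalizer_right _ _
      (hH.trans (T.signExtension_le_normalizer χ))] at hg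
    obtain ⟨M, hM, _, ⟨s, rfl⟩, hMs⟩ := hg
    -- `M` agrees with `T.monomialRep G χ g` up to signs, which commute with all sign matrices.
    have hconj : M * signMatrix ι R (Pi.mulSingle i (-1)) * M⁻¹ =
        signMatrix ι R (Pi.mulSingle (T.permHom G g i) (-1)) := by
      rw [eq_mul_inv_of_mul_eq hMs, mul_inv_eq_iff_eq_mul, ← map_inv, mul_assoc, ← map_mul,
        mul_comm, map_mul, ← mul_assoc, monomialRep_mul_signMatrix, mul_assoc,
        Pi.mulSingle_comp_equiv, Equiv.symm_symm]
    exact hconj ▸ H.mul_mem (H.mul_mem hM hi) (H.inv_mem hM)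
  rintro _ ⟨s, rfl⟩
  refine Subgroup.pi_mem_of_mulSingle_mem (H := H.comap (signMatrix ι R)) s fun j => ?_
  rcases Int.units_eq_one_or (s j) with hs | hs <;> rw [hs, Subgroup.mem_comap]
  · rw [Pi.mulSingle_one, map_one]
    exact H.one_mem
  · exact hsingle j

theorem eq_signExtension_of_closure_eq_top [MulAction.IsPretransitive G (ℙ F V)]
    {H : Subgroup (GL ι R)} (hH : H ≤ T.signExtension G χ) {S : Set G} (hS : Subgroup.closure S = ⊤)
    (hmono : ∀ g ∈ S, T.monomialRep G χ g ∈ H ⊔ (signMatrix ι R).range)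
    {i : ι} (hi : signMatrix ι R (Pi.mulSingle i (-1)) ∈ H) : H = T.signExtension G χ := by
  have hrange : (T.monomialRep G χ).range ≤ H ⊔ (signMatrix ι R).range := by
    rwa [MonoidHom.range_eq_map, ← hS, Subgroup.map_le_iff_le_comap, Subgroup.closure_le]
  have hsign := T.range_signMatrix_le_of_mulSingle_mem χ hH hrange hi
  rw [sup_eq_left.2 hsign] at hrange
  exact hH.antisymm (sup_le hrange hsign)

theorem forall_eq_of_forall_commute_monomialRep [NeZero (2 : R)]
    [MulAction.IsPretransitive G (ℙ F V)] {s : ι → ℤˣ}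
    (h : ∀ g, Commute (T.monomialRep G χ g) (signMatrix ι R s)) (i j : ι) :
    s i = s j := by
  obtain ⟨g, rfl⟩ := T.exists_permHom_apply_eq G i j
  rw [← congrFun ((T.commute_monomialRep_signMatrix_iff χ).1 (h g)) (T.permHom G g i),
    Function.comp_apply, Equiv.symm_apply_apply]

end SignExtension

section SpecialLinear

open scoped MatrixGroups

variable {n F ι R : Type*} [Field F]

theorem permHom_eq_one_iff_mem_center [Fintype n] [DecidableEq n]
    (T : ProjectiveTransversal F (n → F) ι) {A : Matrix.SpecialLinearGroup n F} :
    T.permHom (Matrix.SpecialLinearGroup n F) A = 1 ↔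
      A ∈ Subgroup.center (Matrix.SpecialLinearGroup n F) := by
  rw [permHom_eq_one_iff, Projectivization.SL_mulAction_ker]

variable [CommRing R] [IsDomain R] [Fintype ι] [DecidableEq ι]
  (T : ProjectiveTransversal F (Fin 2 → F) ι) (χ : MulChar F R)

theorem monomialRep_mem_range_signMatrix_of_mem_center
    {A : SL(2, F)} (hA : A ∈ Subgroup.center SL(2, F)) :
    T.monomialRep SL(2, F) χ A ∈ (signMatrix ι R).range := by
  obtain ⟨r, hr, hrA⟩ := Matrix.SpecialLinearGroup.mem_center_iff.1 hA
  have hsmul (j : ι) : r • T.rep j = A • T.rep j := by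
    rw [Matrix.SpecialLinearGroup.smul_def, ← hrA, scalar_apply, ← smul_one_eq_diagonal]
    simp
  obtain ⟨e, he⟩ : ∃ e : ℤˣ, ((e : ℤ) : R) = χ r := by
    have hχ : χ r ^ 2 = 1 := by rw [← map_pow, ← Fintype.card_fin 2, hr, map_one]
    rcases sq_eq_one_iff.1 hχ with h | h
    · exact ⟨1, by simp [h]⟩
    · exact ⟨-1, by simp [h]⟩
  refine ⟨Function.const ι e, ?_⟩
  ext i j
  rw [monomialRep_apply_of_smul_rep_eq χ (hsmul j), coe_signMatrix, diagonal_apply, ← he]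
  rfl

theorem comap_monomialRep_range_signMatrix :
    (signMatrix ι R).range.comap (T.monomialRep SL(2, F) χ) =
      Subgroup.center SL(2, F) :=
  le_antisymm
    (fun _ hA => T.permHom_eq_one_iff_mem_center.1 (T.permHom_eq_one_of_monomialRep_mem χ hA))
    fun _ hA => T.monomialRep_mem_range_signMatrix_of_mem_center χ hA

theorem card_signExtension [NeZero (2 : R)] :
    Nat.card (T.signExtension SL(2, F) χ) =
      2 ^ Fintype.card ι * Nat.card PSL(2, F) := by
  rw [signExtension, card_sup_range_of_le_normalizer (T.range_monomialRep_le_normalizer χ),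
    card_range_signMatrix, comap_monomialRep_range_signMatrix, Subgroup.index_eq_card]

theorem mem_range_signMatrix_of_forall_commute_signMatrix [NeZero (2 : R)] {M : GL ι R}
    (hM : M ∈ T.signExtension SL(2, F) χ) (h : ∀ s, Commute M (signMatrix ι R s)) :
    M ∈ (signMatrix ι R).range := by
  obtain ⟨A, s, rfl⟩ := T.exists_monomialRep_mul_signMatrix_eq χ hM
  have hA : A ∈ Subgroup.center SL(2, F) :=
    T.permHom_eq_one_iff_mem_center.1 <| T.permHom_eq_one_of_forall_commute_signMatrix χ fun x => by
      simpa using (h x).mul_left ((Commute.all s x).map (signMatrix ι R)).inv_left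
  exact mul_mem (T.monomialRep_mem_range_signMatrix_of_mem_center χ hA) ⟨s, rfl⟩

theorem mem_signExtension_and_forall_commute_iff [NeZero (2 : R)] {M : GL ι R} :
    (M ∈ T.signExtension SL(2, F) χ ∧ ∀ N ∈ T.signExtension SL(2, F) χ, Commute M N) ↔
      (M : Matrix ι ι R) = 1 ∨ (M : Matrix ι ι R) = -1 := by
  rw [coe_eq_one_or_neg_one_iff_exists_signMatrix_const]
  constructor
  · rintro ⟨hM, hcomm⟩
    obtain ⟨s, rfl⟩ := T.mem_range_signMatrix_of_forall_commute_signMatrix χ hM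
      fun s => hcomm _ (T.signMatrix_mem_signExtension χ s)
    have hconst := T.forall_eq_of_forall_commute_monomialRep χ
      fun A => (hcomm _ (T.monomialRep_mem_signExtension χ A)).symm
    have : Nonempty ι := T.pointEquiv.nonempty
    exact ⟨s (Classical.arbitrary ι), congrArg _ (funext fun i => hconst _ i)⟩
  · rintro ⟨e, rfl⟩
    refine ⟨T.signMatrix_mem_signExtension χ _, fun N _ => Units.ext ?_⟩
    rw [Units.val_mul, Units.val_mul, coe_signMatrix_const, smul_one_mul, mul_smul_one]

end SpecialLinear
end ProjectiveTransversal

section SpecialLinearTwo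

open scoped MatrixGroups

theorem card_specialLinearGroup_mul_card_units (n R : Type*) [Fintype n] [DecidableEq n]
    [Nonempty n] [CommRing R] :
    Nat.card (Matrix.SpecialLinearGroup n R) * Nat.card Rˣ = Nat.card (GL n R) := by
  have hker : (GeneralLinearGroup.det : GL n R →* Rˣ).ker =
      (Matrix.SpecialLinearGroup.toGL : Matrix.SpecialLinearGroup n R →* GL n R).range := by
    refine SetLike.coe_injective ?_
    rw [MonoidHom.coe_range, Matrix.SpecialLinearGroup.range_toGL]
    rfl
  rw [← Subgroup.card_mul_index (GeneralLinearGroup.det : GL n R →* Rˣ).ker, Subgroup.index_ker,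
    MonoidHom.range_eq_top.2 GeneralLinearGroup.det_surjective, Subgroup.card_top, hker,
    ← Nat.card_congr
      (MonoidHom.ofInjective Matrix.SpecialLinearGroup.toGL_injective).toEquiv]

theorem card_center_SL_two (R : Type*) [CommRing R] [IsDomain R] [NeZero (2 : R)] :
    Nat.card (Subgroup.center SL(2, R)) = 2 := by
  rw [Nat.card_congr (Matrix.SpecialLinearGroup.center_equiv_rootsOfUnity' (0 : Fin 2)).toEquiv,
    Fintype.card_fin]
  have hchar : ringChar R ≠ 2 := fun h =>
    two_ne_zero (α := R)
      (by simpa only [h, Nat.cast_ofNat] using ringChar.Nat.cast_ringChar (R := R))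
  exact (IsPrimitiveRoot.neg_one _ hchar).card_rootsOfUnity

theorem two_mul_card_PSL_two (F : Type*) [Field F] [Fintype F] [NeZero (2 : F)] :
    2 * Nat.card PSL(2, F) = Fintype.card F * (Fintype.card F ^ 2 - 1) := by
  have hSL := card_specialLinearGroup_mul_card_units (Fin 2) F
  rw [card_GL_field, ← Subgroup.card_mul_index (Subgroup.center SL(2, F)), card_center_SL_two,
    Nat.card_units, Nat.card_eq_fintype_card, Fin.prod_univ_two] at hSL
  have hq : 0 < Fintype.card F - 1 := Nat.sub_pos_of_lt Fintype.one_lt_card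
  refine Nat.eq_of_mul_eq_mul_right hq (hSL.trans ?_)
  rw [Fin.val_zero, pow_zero, Fin.val_one, pow_one, pow_two, ← Nat.mul_sub_one, mul_comm,
    mul_right_comm]

theorem transvection_natCast {n R : Type*} [Fintype n] [DecidableEq n] [CommRing R] {i j : n}
    (hij : i ≠ j) (m : ℕ) :
    Matrix.SpecialLinearGroup.transvection hij (m : R) =
      Matrix.SpecialLinearGroup.transvection hij 1 ^ m := by
  induction m with
  | zero => rw [Nat.cast_zero, Matrix.SpecialLinearGroup.transvection_coeff_zero, pow_zero]
  | succ m ih =>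
    rw [Nat.cast_succ, Matrix.SpecialLinearGroup.transvection_add, ih, pow_succ]

theorem eq_top_of_transvection_mem {p : ℕ} [Fact p.Prime] {H : Subgroup SL(2, ZMod p)}
    (hupper : Matrix.SpecialLinearGroup.transvection zero_ne_one 1 ∈ H)
    (hlower : Matrix.SpecialLinearGroup.transvection one_ne_zero 1 ∈ H) : H = ⊤ := by
  refine (Subgroup.eq_top_iff' H).2 fun A =>
    Matrix.SL2.transvection_induction (· ∈ H) (fun i j hij c => ?_) (fun _ _ => mul_mem) A
  rw [← ZMod.natCast_zmod_val c, transvection_natCast]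
  refine pow_mem ?_ _
  fin_cases i <;> fin_cases j
  · exact absurd rfl hij
  · exact hupper
  · exact hlower
  · exact absurd rfl hij

end SpecialLinearTwo

section BrandhorstHashimoto

open scoped MatrixGroups

instance fact_prime_five : Fact (Nat.Prime 5) := ⟨Nat.prime_five⟩

/-- Representatives of the six points of the projective line over `𝔽₅`, ordered and scaled so that
`vBH` and (up to signs) `uBH` are the matrices by which `[1, 1; 0, 1]` and `[0, 2; 2, 0]` act in
a monomial representation. -/
def projectiveLineZModFive : ProjectiveTransversal (ZMod 5) (Fin 2 → ZMod 5) (Fin 6) where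
  rep := ![![1, 1], ![2, 1], ![3, 1], ![4, 1], ![2, 0], ![0, 1]]
  rep_ne_zero := by decide
  bijective_mk_rep := by
    constructor
    · intro i j h
      rw [Projectivization.mk_eq_mk_iff'] at h
      revert i j; decide
    · refine Projectivization.ind fun v hv => ?_
      simp_rw [Projectivization.mk_eq_mk_iff']
      revert v; decide

theorem exists_mulChar_two_eq_I : ∃ χ : MulChar (ZMod 5) ℂ, χ 2 = I := by
  let two : (ZMod 5)ˣ := ⟨2, 3, rfl, rfl⟩
  have htwo : ∀ x, x ∈ Subgroup.zpowers two := by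
    have hpow : ∀ x : (ZMod 5)ˣ, ∃ k : Fin 4, two ^ (k : ℕ) = x := by decide
    exact fun x => (hpow x).elim fun k hk => ⟨k, mod_cast hk⟩
  have hI : Units.mk0 I I_ne_zero ∈ rootsOfUnity (Fintype.card (ZMod 5)ˣ) ℂ := by
    rw [ZMod.card_units 5, _root_.mem_rootsOfUnity, Units.ext_iff]
    simp
  exact ⟨MulChar.ofRootOfUnity hI htwo, MulChar.ofRootOfUnity_spec hI htwo⟩

theorem mulChar_three_eq_neg_I {χ : MulChar (ZMod 5) ℂ} (hχ : χ 2 = I) : χ 3 = -I := by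
  rw [show (3 : ZMod 5) = 2 ^ 3 from rfl, map_pow, hχ, I_pow_three]

theorem mulChar_neg_one_eq {χ : MulChar (ZMod 5) ℂ} (hχ : χ 2 = I) : χ (-1) = -1 := by
  rw [show (-1 : ZMod 5) = 2 ^ 2 from rfl, map_pow, hχ, I_sq]

/-- The element of `SL(2, 𝔽₅)` which, up to signs, acts as `uBH` in the monomial representation. -/
def antidiagTwo : SL(2, ZMod 5) := ⟨!![0, 2; 2, 0], by decide⟩

theorem closure_transvection_antidiagTwo :
    Subgroup.closure {Matrix.SpecialLinearGroup.transvection zero_ne_one 1, antidiagTwo} = ⊤ := by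
  set H := Subgroup.closure
    {Matrix.SpecialLinearGroup.transvection zero_ne_one (1 : ZMod 5), antidiagTwo}
  have hupper : Matrix.SpecialLinearGroup.transvection zero_ne_one 1 ∈ H :=
    Subgroup.subset_closure (Set.mem_insert _ _)
  have hanti : antidiagTwo ∈ H := Subgroup.subset_closure (Set.mem_insert_of_mem _ rfl)
  have hconj : antidiagTwo * Matrix.SpecialLinearGroup.transvection zero_ne_one 1 *
      antidiagTwo⁻¹ = Matrix.SpecialLinearGroup.transvection one_ne_zero 1 := by decide
  exact eq_top_of_transvection_mem hupper
    (hconj ▸ mul_mem (mul_mem hanti hupper) (inv_mem hanti))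

theorem coe_signMatrix_eq_tBH :
    (signMatrix (Fin 6) ℂ (Pi.mulSingle 0 (-1)) : Matrix (Fin 6) (Fin 6) ℂ) = tBH := by
  ext i j
  fin_cases i <;> fin_cases j <;> simp [tBH, Pi.mulSingle, Function.update]

theorem coe_monomialRep_eq_vBH (χ : MulChar (ZMod 5) ℂ) :
    (projectiveLineZModFive.monomialRep SL(2, ZMod 5) χ
      (Matrix.SpecialLinearGroup.transvection zero_ne_one 1) : Matrix (Fin 6) (Fin 6) ℂ) = vBH := by
  have hrep : ∀ j : Fin 6, (1 : ZMod 5) •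
      projectiveLineZModFive.rep (![1, 2, 3, 5, 4, 0] j) =
        (Matrix.SpecialLinearGroup.transvection zero_ne_one 1 : SL(2, ZMod 5)) •
          projectiveLineZModFive.rep j := by decide
  ext i j
  rw [ProjectiveTransversal.monomialRep_apply_of_smul_rep_eq χ (hrep j), map_one]
  fin_cases i <;> fin_cases j <;> simp [vBH]

theorem coe_signMatrix_mul_monomialRep_eq_uBH {χ : MulChar (ZMod 5) ℂ} (hχ : χ 2 = I) :
    ((signMatrix (Fin 6) ℂ ![1, 1, -1, 1, 1, -1] *
      projectiveLineZModFive.monomialRep SL(2, ZMod 5) χ antidiagTwo : GL (Fin 6) ℂ) :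
        Matrix (Fin 6) (Fin 6) ℂ) = uBH := by
  have hrep : ∀ j : Fin 6, (![2, -1, 1, 3, -1, 1] j : ZMod 5) •
      projectiveLineZModFive.rep (![0, 2, 1, 3, 5, 4] j) =
        antidiagTwo • projectiveLineZModFive.rep j := by decide
  ext i j
  rw [Units.val_mul, coe_signMatrix, diagonal_mul,
    ProjectiveTransversal.monomialRep_apply_of_smul_rep_eq χ (hrep j)]
  fin_cases i <;> fin_cases j <;>
    simp [uBH, hχ, mulChar_three_eq_neg_I hχ, mulChar_neg_one_eq hχ]

theorem GBH_eq_signExtension {χ : MulChar (ZMod 5) ℂ} (hχ : χ 2 = I) :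
    GBH = projectiveLineZModFive.signExtension SL(2, ZMod 5) χ := by
  have ht : signMatrix (Fin 6) ℂ (Pi.mulSingle 0 (-1)) ∈ GBH :=
    Subgroup.subset_closure (Or.inl coe_signMatrix_eq_tBH)
  have hu : signMatrix (Fin 6) ℂ ![1, 1, -1, 1, 1, -1] *
      projectiveLineZModFive.monomialRep SL(2, ZMod 5) χ antidiagTwo ∈ GBH :=
    Subgroup.subset_closure (Or.inr (Or.inl (coe_signMatrix_mul_monomialRep_eq_uBH hχ)))
  have hv : projectiveLineZModFive.monomialRep SL(2, ZMod 5) χ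
      (Matrix.SpecialLinearGroup.transvection zero_ne_one 1) ∈ GBH :=
    Subgroup.subset_closure (Or.inr (Or.inr (coe_monomialRep_eq_vBH χ)))
  refine projectiveLineZModFive.eq_signExtension_of_closure_eq_top χ ((Subgroup.closure_le _).2 ?_)
    closure_transvection_antidiagTwo ?_ ht
  · rintro g (hg | hg | hg)
    · rw [Units.ext (hg.trans coe_signMatrix_eq_tBH.symm)]
      exact ProjectiveTransversal.signMatrix_mem_signExtension _ _ _
    · rw [Units.ext (hg.trans (coe_signMatrix_mul_monomialRep_eq_uBH hχ).symm)]
      exact mul_mem (ProjectiveTransversal.signMatrix_mem_signExtension _ _ _)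
        (ProjectiveTransversal.monomialRep_mem_signExtension _ _ _)
    · rw [Units.ext (hg.trans (coe_monomialRep_eq_vBH χ).symm)]
      exact ProjectiveTransversal.monomialRep_mem_signExtension _ _ _
  · rintro g (rfl | rfl)
    · exact Subgroup.mem_sup_left hv
    · have hs : signMatrix (Fin 6) ℂ ![1, 1, -1, 1, 1, -1] ∈ GBH ⊔ (signMatrix (Fin 6) ℂ).range :=
        Subgroup.mem_sup_right ⟨_, rfl⟩
      exact (Subgroup.mul_mem_cancel_left _ hs).1 (Subgroup.mem_sup_left hu)

theorem card_PSL_two_ZMod_five : Nat.card PSL(2, ZMod 5) = 60 := by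
  have : NeZero (2 : ZMod 5) := ⟨by decide⟩
  have hcard := two_mul_card_PSL_two (ZMod 5)
  rw [ZMod.card] at hcard
  lia

end BrandhorstHashimoto

/-- `G_BH` has order `3840` and its center consists exactly of `Id` and `-Id`. -/
theorem stmt_17 :
    Nat.card GBH = 3840 ∧
    {g : GL (Fin 6) ℂ | g ∈ GBH ∧ ∀ h ∈ GBH, g * h = h * g} =
      {g : GL (Fin 6) ℂ |
        (↑g : Matrix (Fin 6) (Fin 6) ℂ) = 1 ∨ (↑g : Matrix (Fin 6) (Fin 6) ℂ) = -1} := by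
  obtain ⟨χ, hχ⟩ := exists_mulChar_two_eq_I
  rw [GBH_eq_signExtension hχ]
  constructor
  · rw [projectiveLineZModFive.card_signExtension χ, card_PSL_two_ZMod_five, Fintype.card_fin]
    norm_num
  · ext g
    exact projectiveLineZModFive.mem_signExtension_and_forall_commute_iff χ
end

section
/- The quotient of G₂₉ by its subgroup of scalar matrices (equivalently, the image PG₂₉ of G₂₉ in PGL(4,ℂ)) and the quotient of G_BH by its subgroup of scalar matrices (equivalently, the image PG_BH of G_BH in PGL(6,ℂ)) are both finite groups of order 1920, but they are not isomorphic as groups. -/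
open Matrix Complex

/-- The scalar matrices of `GL(n,ℂ)` form its center; `PG₂₉` is the image of `G₂₉` in
`PGL(4,ℂ) = GL(4,ℂ)/center`, i.e. the quotient of `G₂₉` by its scalar matrices. -/
def PG29 : Subgroup ((GL (Fin 4) ℂ) ⧸ Subgroup.center (GL (Fin 4) ℂ)) :=
  G29.map (QuotientGroup.mk' (Subgroup.center (GL (Fin 4) ℂ)))

/-- `PG_BH` is the image of `G_BH` in `PGL(6,ℂ) = GL(6,ℂ)/center`, i.e. the quotient
of `G_BH` by its subgroup of scalar matrices. -/
noncomputable def PGBH : Subgroup ((GL (Fin 6) ℂ) ⧸ Subgroup.center (GL (Fin 6) ℂ)) :=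
  GBH.map (QuotientGroup.mk' (Subgroup.center (GL (Fin 6) ℂ)))

/-!
`G₂₉` normalizes the group of two-qubit Pauli matrices. The fifteen nonscalar Pauli classes split
into five commuting triples, and the generators permute these triples as adjacent transpositions, so
`G₂₉` acts through `S₅`. A projective transformation commuting with every Pauli class is itself a
Pauli class, so the kernel consists of the `2⁴` Pauli classes and the order is `120 · 2⁴`. A product
of three of the generators has order `8`.

`G_BH` is monomial and permutes the twelve forms `±x_j²` in the way that `A₅` permutes one of its
conjugacy classes of `5`-cycles by conjugation. The kernel consists of the sign matrices modulo
`±1`, so the order is `60 · 2⁵`. The elements of `A₅` have order `1`, `2`, `3` or `5`, and those of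
the kernel have order at most `2`, so no element has order `8`.
-/

open Equiv

section Pairs

variable {A Q ι : Type*} [Group A] [Group Q]

theorem card_map_fst_eq_card_map_snd_mul_card_comap_inl (Γ : Subgroup (A × Q))
    (hΓ : ∀ q, (1, q) ∈ Γ → q = 1) :
    Nat.card (Γ.map (MonoidHom.fst A Q)) =
      Nat.card (Γ.map (MonoidHom.snd A Q)) * Nat.card (Γ.comap (MonoidHom.inl A Q)) := by
  have fst_injective : Function.Injective ((MonoidHom.fst A Q).domRestrict Γ) := by
    refine (injective_iff_map_eq_one _).2 ?_
    rintro ⟨⟨x, q⟩, hxq⟩ (rfl : x = 1)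
    obtain rfl := hΓ q hxq
    rfl
  have card_ker : Nat.card ((MonoidHom.snd A Q).domRestrict Γ).ker =
      Nat.card (Γ.comap (MonoidHom.inl A Q)) := by
    refine Nat.card_congr ⟨fun z => ⟨z.1.1.1, ?_⟩, fun x => ⟨⟨(x, 1), x.2⟩, rfl⟩, ?_, fun _ => rfl⟩
    · obtain ⟨⟨⟨x, q⟩, hxq⟩, rfl : q = 1⟩ := z
      exact hxq
    · rintro ⟨⟨⟨x, q⟩, hxq⟩, rfl : q = 1⟩
      rfl
  calc Nat.card (Γ.map (MonoidHom.fst A Q))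
      = Nat.card Γ := by
        rw [← MonoidHom.domRestrict_range]
        exact (Nat.card_congr (MonoidHom.ofInjective fst_injective).toEquiv).symm
    _ = _ := by
        rw [← MonoidHom.domRestrict_range, ← card_ker, ← Subgroup.index_ker, mul_comm,
          Subgroup.card_mul_index]

/-- The subgroup of `A × Q` generated by the pairs `(a i, b i)`: it relates each word in the `a i`
to the same word in the `b i`. -/
def jointClosure (a : ι → A) (b : ι → Q) : Subgroup (A × Q) :=
  Subgroup.closure (Set.range fun i => (a i, b i))

theorem mk_mem_jointClosure (a : ι → A) (b : ι → Q) (i : ι) : (a i, b i) ∈ jointClosure a b :=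
  Subgroup.subset_closure ⟨i, rfl⟩

theorem jointClosure_le_iff (a : ι → A) (b : ι → Q) (H : Subgroup (A × Q)) :
    jointClosure a b ≤ H ↔ ∀ i, (a i, b i) ∈ H := by
  rw [jointClosure, Subgroup.closure_le, Set.range_subset_iff]
  rfl

theorem map_fst_jointClosure (a : ι → A) (b : ι → Q) :
    (jointClosure a b).map (MonoidHom.fst A Q) = Subgroup.closure (Set.range a) := by
  rw [jointClosure, MonoidHom.map_closure, ← Set.range_comp]
  rfl

theorem map_snd_jointClosure (a : ι → A) (b : ι → Q) :
    (jointClosure a b).map (MonoidHom.snd A Q) = Subgroup.closure (Set.range b) := by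
  rw [jointClosure, MonoidHom.map_closure, ← Set.range_comp]
  rfl

end Pairs

theorem setOf_units_val_mem_range {M ι : Type*} [Monoid M] (a : ι → Mˣ) :
    {g : Mˣ | (g : M) ∈ Set.range fun i => (a i : M)} = Set.range a := by
  ext g
  simp only [Set.mem_ofPred_eq, Set.mem_range, Units.val_inj]

section ProjGL

variable {n R : Type*} [Fintype n] [DecidableEq n] [CommRing R]

/-- The projective general linear group, spelled as the quotient by the center that occurs in
`PG29` and `PGBH`. -/
abbrev ProjGL (n R : Type*) [Fintype n] [DecidableEq n] [CommRing R] : Type _ :=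
  GL n R ⧸ Subgroup.center (GL n R)

/-- The class of an invertible matrix in the projective general linear group. -/
abbrev ProjGL.mk : GL n R →* ProjGL n R :=
  QuotientGroup.mk' (Subgroup.center (GL n R))

theorem ProjGL.mk_eq_one_iff {g : GL n R} :
    ProjGL.mk g = 1 ↔ ∃ c : R, (g : Matrix n n R) = c • 1 := by
  rw [QuotientGroup.mk'_apply, QuotientGroup.eq_one_iff,
    GeneralLinearGroup.mem_center_iff_val_mem_range_scalar]
  simp only [Set.mem_range, smul_one_eq_diagonal, scalar_apply, eq_comm]

theorem ProjGL.mk_eq_mk_iff {g h : GL n R} :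
    ProjGL.mk g = ProjGL.mk h ↔ ∃ c : R, (g : Matrix n n R) = c • (h : Matrix n n R) := by
  rw [← mul_inv_eq_one, ← map_inv, ← map_mul, ProjGL.mk_eq_one_iff]
  refine exists_congr fun c => ?_
  rw [Units.val_mul, Units.mul_inv_eq_iff_eq_mul, smul_one_mul]

end ProjGL

theorem map_mk_closure_eq_map_fst_jointClosure {n R Q ι : Type*} [Fintype n] [DecidableEq n]
    [CommRing R] [Group Q] (a : ι → GL n R) (b : ι → Q) :
    (Subgroup.closure {g : GL n R | (g : Matrix n n R) ∈
      Set.range fun i => (a i : Matrix n n R)}).map ProjGL.mk =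
      (jointClosure (fun i => ProjGL.mk (a i)) b).map (MonoidHom.fst _ Q) := by
  rw [map_fst_jointClosure, setOf_units_val_mem_range, MonoidHom.map_closure, ← Set.range_comp]
  rfl

section SignMatrix

variable {n R : Type*} [Fintype n] [DecidableEq n] [CommRing R]

/-- The invertible diagonal matrices with diagonal entries `±1`. -/
def signGL (n R : Type*) [Fintype n] [DecidableEq n] [CommRing R] : (n → ℤˣ) →* GL n R :=
  MonoidHom.toHomUnits
    { toFun := fun ε => diagonal fun j => ((ε j : ℤ) : R)
      map_one' := by simp
      map_mul' := by simp }

theorem coe_signGL (ε : n → ℤˣ) :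
    (signGL n R ε : Matrix n n R) = diagonal fun j => ((ε j : ℤ) : R) :=
  rfl

theorem exists_eq_signGL [IsDomain R] {A : GL n R}
    (hA : ∀ v j, (A.val *ᵥ v) j ^ 2 = v j ^ 2) : ∃ ε, A = signGL n R ε := by
  have entry_sq (j k : n) : A.val j k ^ 2 = if j = k then 1 else 0 := by
    simpa [Pi.single_apply, ite_pow] using hA (Pi.single k 1) j
  have entry_diag (j : n) : ∃ z : ℤˣ, A.val j j = ((z : ℤ) : R) := by
    obtain h | h := sq_eq_one_iff.1 ((entry_sq j j).trans (if_pos rfl))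
    · exact ⟨1, by simpa using h⟩
    · exact ⟨-1, by simpa using h⟩
  choose ε hε using entry_diag
  refine ⟨ε, Units.ext (Matrix.ext fun j k => ?_)⟩
  obtain rfl | hjk := eq_or_ne j k
  · rw [coe_signGL, diagonal_apply_eq, hε]
  · rw [coe_signGL, diagonal_apply_ne _ hjk]
    exact pow_eq_zero_iff two_ne_zero |>.1 ((entry_sq j k).trans (if_neg hjk))

theorem mk_signGL_eq_one_iff [Nonempty n] [CharZero R] {ε : n → ℤˣ} :
    ProjGL.mk (signGL n R ε) = 1 ↔ ε ∈ (Pi.constMonoidHom n ℤˣ).range := by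
  rw [ProjGL.mk_eq_one_iff]
  constructor
  · rintro ⟨c, hc⟩
    have entry_eq (j : n) : ((ε j : ℤ) : R) = c := by
      simpa [coe_signGL] using congrFun (congrFun hc j) j
    refine ⟨ε (Classical.arbitrary n), funext fun j => Units.ext (Int.cast_injective (α := R) ?_)⟩
    exact (entry_eq _).trans (entry_eq j).symm
  · rintro ⟨z, rfl⟩
    exact ⟨((z : ℤ) : R), by rw [coe_signGL, smul_one_eq_diagonal]; rfl⟩

theorem card_range_mk_signGL [Nonempty n] [CharZero R] :
    2 * Nat.card (ProjGL.mk.comp (signGL n R)).range = 2 ^ Fintype.card n := by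
  have ker_eq : (ProjGL.mk.comp (signGL n R)).ker = (Pi.constMonoidHom n ℤˣ).range :=
    Subgroup.ext fun _ => mk_signGL_eq_one_iff
  have card_ker : Nat.card (ProjGL.mk.comp (signGL n R)).ker = 2 := by
    rw [ker_eq, ← Nat.card_congr (MonoidHom.ofInjective Function.const_injective).toEquiv]
    simp
  rw [← Subgroup.index_ker, ← card_ker, Subgroup.card_mul_index, card_ker]
  simp

theorem signGL_mul_self (ε : n → ℤˣ) : signGL n R ε * signGL n R ε = 1 := by
  rw [← map_mul, ← map_one (signGL n R)]
  exact congrArg _ (funext fun j => Int.units_mul_self (ε j))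

theorem diagonal_mul_permMatrix_apply (w : n → R) (σ : Perm n) (j k : n) :
    (diagonal w * σ.permMatrix R) j k = if σ j = k then w j else 0 := by
  simp [eq_comm]

theorem mul_signGL_mul_inv_of_eq_diagonal_mul_permMatrix {A : GL n R} {w : n → R} {σ : Perm n}
    (hA : A.val = diagonal w * σ.permMatrix R) (ε : n → ℤˣ) :
    A * signGL n R ε * A⁻¹ = signGL n R (ε ∘ σ) := by
  rw [mul_inv_eq_iff_eq_mul]
  refine Units.ext (Matrix.ext fun j k => ?_)
  rw [Units.val_mul, Units.val_mul, hA, coe_signGL, coe_signGL, mul_diagonal,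
    diagonal_mul_permMatrix_apply, diagonal_mul, diagonal_mul_permMatrix_apply]
  split_ifs with h
  · rw [Function.comp_apply, h, mul_comm]
  · simp

end SignMatrix

theorem alternatingGroup_le_of_isCycle_mem_of_isThreeCycle_mem {α : Type*} [Fintype α]
    [DecidableEq α] (hα : (Nat.card α).Prime) {G : Subgroup (Perm α)} {σ τ : Perm α}
    (hσ : σ.IsCycle) (hσ_support : σ.support = Finset.univ) (hσG : σ ∈ G) (hτ : τ.IsThreeCycle)
    (hτG : τ ∈ G) : alternatingGroup α ≤ G := by
  have : MulAction.IsPretransitive G α := by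
    refine ⟨fun x y => ?_⟩
    have moves (z : α) : σ z ≠ z := Perm.mem_support.1 (hσ_support ▸ Finset.mem_univ z)
    obtain ⟨k, hk⟩ := hσ.exists_zpow_eq (moves x) (moves y)
    exact ⟨⟨σ ^ k, G.zpow_mem hσG k⟩, hk⟩
  exact Perm.alternatingGroup_le_of_isPreprimitive_of_isThreeCycle_mem
    (MulAction.IsPreprimitive.of_prime_card hα) hτ hτG

section Twirl

variable {ι n R : Type*} [Fintype ι] [Fintype n] [DecidableEq n] [CommRing R]
  {p : ι → Matrix n n R} {N : R}

theorem sum_trace_mul_smul_eq_smul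
    (hp : ∀ a b c d, ∑ k, p k a b * p k c d = if a = d ∧ b = c then N else 0)
    (M : Matrix n n R) : ∑ k, (p k * M).trace • p k = N • M := by
  ext c d
  calc (∑ k, (p k * M).trace • p k) c d
      = ∑ k, ∑ a, ∑ b, M b a * (p k a b * p k c d) := by
        simp only [Matrix.sum_apply, Matrix.smul_apply, smul_eq_mul, trace, diag_apply, mul_apply,
          Finset.mul_sum, mul_comm, mul_left_comm]
    _ = ∑ a, ∑ b, M b a * ∑ k, p k a b * p k c d := by
        simp only [Finset.mul_sum]
        rw [Finset.sum_comm]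
        exact Finset.sum_congr rfl fun a _ => Finset.sum_comm
    _ = (N • M) c d := by
        simp [hp, ite_and, mul_comm]

theorem sum_mul_mul_eq_smul_one
    (hp : ∀ a b c d, ∑ k, p k a b * p k c d = if a = d ∧ b = c then N else 0)
    (M : Matrix n n R) : ∑ k, p k * M * p k = (N * M.trace) • 1 := by
  ext a d
  calc (∑ k, p k * M * p k) a d
      = ∑ k, ∑ c, ∑ b, M b c * (p k a b * p k c d) := by
        simp only [Matrix.sum_apply, mul_apply, Finset.mul_sum, mul_comm, mul_left_comm]
    _ = ∑ c, ∑ b, M b c * ∑ k, p k a b * p k c d := by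
        simp only [Finset.mul_sum]
        rw [Finset.sum_comm]
        exact Finset.sum_congr rfl fun a _ => Finset.sum_comm
    _ = ((N * M.trace) • (1 : Matrix n n R)) a d := by
        simp only [hp]
        by_cases h : a = d <;> simp [h, trace, Finset.mul_sum, mul_comm]

end Twirl

section GaussianModel

variable {n : Type*} [Fintype n] [DecidableEq n]

/-- `A` is a model of `g` over the Gaussian integers when it equals `g` up to a nonzero scalar;
it determines the class of `g` in `ProjGL n ℂ` and its entries can be computed with. -/
def IsGaussianModel (A : Matrix n n GaussianInt) (g : GL n ℂ) : Prop :=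
  ∃ c : ℂ, c ≠ 0 ∧ A.map GaussianInt.toComplex = c • (g : Matrix n n ℂ)

namespace IsGaussianModel

variable {A B : Matrix n n GaussianInt} {g h : GL n ℂ}

theorem one : IsGaussianModel (1 : Matrix n n GaussianInt) 1 :=
  ⟨1, one_ne_zero, by simp⟩

theorem mul (hA : IsGaussianModel A g) (hB : IsGaussianModel B h) :
    IsGaussianModel (A * B) (g * h) := by
  obtain ⟨c, hc, hAc⟩ := hA
  obtain ⟨d, hd, hBd⟩ := hB
  refine ⟨c * d, mul_ne_zero hc hd, ?_⟩
  rw [Matrix.map_mul, hAc, hBd, smul_mul_smul_comm, Units.val_mul]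

theorem pow (hA : IsGaussianModel A g) (k : ℕ) : IsGaussianModel (A ^ k) (g ^ k) := by
  induction k with
  | zero => simpa only [pow_zero] using one
  | succ k ih => simpa only [pow_succ] using ih.mul hA

theorem mk_eq_mk (hA : IsGaussianModel A g) (hB : IsGaussianModel B h) (z : GaussianInt)
    (hAB : A = z • B) : ProjGL.mk g = ProjGL.mk h := by
  obtain ⟨c, hc, hAc⟩ := hA
  obtain ⟨d, -, hBd⟩ := hB
  have smul_eq : c • (g : Matrix n n ℂ) = (GaussianInt.toComplex z * d) • (h : Matrix n n ℂ) := by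
    rw [← hAc, mul_smul, ← hBd, hAB]
    ext i j
    simp
  exact ProjGL.mk_eq_mk_iff.2 ⟨c⁻¹ * (GaussianInt.toComplex z * d), by
    rw [mul_smul, ← smul_eq, inv_smul_smul₀ hc]⟩

end IsGaussianModel

end GaussianModel

section Pauli

/-- The one-qubit Pauli matrices `1, X, Y, Z`. -/
def qubitPauli : Fin 4 → Matrix (Fin 2) (Fin 2) GaussianInt :=
  ![1, !![0, 1; 1, 0], !![0, ⟨0, -1⟩; ⟨0, 1⟩, 0], !![1, 0; 0, -1]]

/-- The sixteen two-qubit Pauli matrices, tensor products of the one-qubit ones. -/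
def pauli (k : Fin 4 × Fin 4) : Matrix (Fin 4) (Fin 4) GaussianInt :=
  (kroneckerMap (· * ·) (qubitPauli k.1) (qubitPauli k.2)).reindex finProdFinEquiv finProdFinEquiv

theorem pauli_mul_self (k : Fin 4 × Fin 4) : pauli k * pauli k = 1 := by
  revert k
  decide +kernel

theorem pauli_zero : pauli 0 = 1 := by
  decide +kernel

theorem sum_pauli_mul_pauli (a b c d : Fin 4) :
    ∑ k, pauli k a b * pauli k c d = if a = d ∧ b = c then 4 else 0 := by
  revert a b c d
  decide +kernel

theorem trace_pauli_mul_pauli {k l : Fin 4 × Fin 4} (hkl : k ≠ l) :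
    (pauli k * pauli l).trace = 0 := by
  revert k l
  decide +kernel

theorem pauli_mul_comm_or_anticomm (k l : Fin 4 × Fin 4) :
    ∃ z : ℤˣ, pauli k * pauli l = ((z : ℤ) : GaussianInt) • (pauli l * pauli k) := by
  revert k l
  decide +kernel

/-- The Pauli matrices as elements of `GL (Fin 4) ℂ`. -/
noncomputable def pauliGL (k : Fin 4 × Fin 4) : GL (Fin 4) ℂ :=
  GeneralLinearGroup.map GaussianInt.toComplex
    ⟨pauli k, pauli k, pauli_mul_self k, pauli_mul_self k⟩

/-- The class of a Pauli matrix in the projective general linear group. -/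
noncomputable def pauliClass (k : Fin 4 × Fin 4) : ProjGL (Fin 4) ℂ :=
  ProjGL.mk (pauliGL k)

theorem isGaussianModel_pauliGL (k : Fin 4 × Fin 4) : IsGaussianModel (pauli k) (pauliGL k) :=
  ⟨1, one_ne_zero, (one_smul _ _).symm⟩

theorem pauliGL_mul_self (k : Fin 4 × Fin 4) : pauliGL k * pauliGL k = 1 := by
  rw [pauliGL, ← map_mul, ← map_one (GeneralLinearGroup.map GaussianInt.toComplex)]
  exact congrArg _ (Units.ext (pauli_mul_self k))

theorem pauliClass_mul_self (k : Fin 4 × Fin 4) : pauliClass k * pauliClass k = 1 := by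
  rw [pauliClass, ← map_mul, pauliGL_mul_self, map_one]

theorem pauliClass_zero : pauliClass 0 = 1 :=
  (isGaussianModel_pauliGL 0).mk_eq_mk .one 1 (by rw [pauli_zero, one_smul])

theorem commute_pauliClass (k l : Fin 4 × Fin 4) : Commute (pauliClass k) (pauliClass l) := by
  obtain ⟨z, hz⟩ := pauli_mul_comm_or_anticomm k l
  rw [Commute, SemiconjBy, pauliClass, pauliClass, ← map_mul, ← map_mul]
  exact ((isGaussianModel_pauliGL k).mul (isGaussianModel_pauliGL l)).mk_eq_mk
    ((isGaussianModel_pauliGL l).mul (isGaussianModel_pauliGL k)) _ hz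

theorem pauliClass_injective : Function.Injective pauliClass := by
  intro k l hkl
  by_contra hne
  obtain ⟨c, hc⟩ := ProjGL.mk_eq_mk_iff.1 hkl
  have trace_eq_zero : ((pauliGL k : Matrix (Fin 4) (Fin 4) ℂ) * pauliGL l).trace = 0 := by
    have := congrArg GaussianInt.toComplex (trace_pauli_mul_pauli hne)
    rwa [map_zero, AddMonoidHom.map_trace, Matrix.map_mul] at this
  have trace_sq : ((pauliGL k : Matrix (Fin 4) (Fin 4) ℂ) * pauliGL k).trace = 4 := by
    rw [← Units.val_mul, pauliGL_mul_self, Units.val_one, trace_one]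
    norm_num
  nth_rw 2 [hc] at trace_sq
  rw [mul_smul_comm, trace_smul, trace_eq_zero, smul_zero] at trace_sq
  norm_num at trace_sq

theorem sum_pauliGL_apply_mul_apply (a b c d : Fin 4) :
    ∑ k, (pauliGL k : Matrix (Fin 4) (Fin 4) ℂ) a b * (pauliGL k : Matrix (Fin 4) (Fin 4) ℂ) c d =
      if a = d ∧ b = c then 4 else 0 := by
  have := congrArg GaussianInt.toComplex (sum_pauli_mul_pauli a b c d)
  simp only [map_sum, map_mul, apply_ite GaussianInt.toComplex, map_ofNat, map_zero] at this
  exact this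

theorem mk_eq_one_of_commute_pauliClass {g : GL (Fin 4) ℂ}
    (hg : ∀ k, Commute (ProjGL.mk g) (pauliClass k))
    (htrace : (g : Matrix (Fin 4) (Fin 4) ℂ).trace ≠ 0) : ProjGL.mk g = 1 := by
  have conj_eq (k) : (pauliGL k * g * pauliGL k : GL (Fin 4) ℂ).val = g.val := by
    obtain ⟨c, hc⟩ := ProjGL.mk_eq_mk_iff.1
      (show ProjGL.mk (pauliGL k * g * pauliGL k) = ProjGL.mk g by
        rw [map_mul, map_mul]
        change pauliClass k * _ * pauliClass k = _
        rw [← (hg k).eq, mul_assoc, pauliClass_mul_self, mul_one])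
    have trace_conj : (pauliGL k * g * pauliGL k : GL (Fin 4) ℂ).val.trace = g.val.trace := by
      rw [Units.val_mul, trace_mul_comm, ← Units.val_mul, ← mul_assoc, pauliGL_mul_self, one_mul]
    have c_eq_one : c = 1 := by
      rw [hc, trace_smul, smul_eq_mul] at trace_conj
      exact (mul_eq_right₀ htrace).1 trace_conj
    simpa only [c_eq_one, one_smul] using hc
  have twirl := sum_mul_mul_eq_smul_one sum_pauliGL_apply_mul_apply (g : Matrix (Fin 4) (Fin 4) ℂ)
  simp only [← Units.val_mul, conj_eq, Finset.sum_const, Finset.card_univ, Fintype.card_prod,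
    Fintype.card_fin] at twirl
  refine ProjGL.mk_eq_one_iff.2 ⟨16⁻¹ * (4 * g.val.trace), ?_⟩
  rw [mul_smul, ← twirl, ← Nat.cast_smul_eq_nsmul ℂ, smul_smul]
  norm_num

theorem exists_eq_pauliClass_of_forall_commute {x : ProjGL (Fin 4) ℂ}
    (hx : ∀ k, Commute x (pauliClass k)) : ∃ k, x = pauliClass k := by
  obtain ⟨g, rfl⟩ := QuotientGroup.mk'_surjective _ x
  obtain ⟨k, hk⟩ : ∃ k, ((pauliGL k : Matrix (Fin 4) (Fin 4) ℂ) * g).trace ≠ 0 := by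
    by_contra! trace_eq_zero
    have := sum_trace_mul_smul_eq_smul sum_pauliGL_apply_mul_apply (g : Matrix (Fin 4) (Fin 4) ℂ)
    simp only [trace_eq_zero, zero_smul, Finset.sum_const_zero] at this
    exact g.ne_zero (by simpa using this.symm)
  refine ⟨k, ?_⟩
  have pauli_mul_eq_one : pauliClass k * ProjGL.mk g = 1 := by
    rw [pauliClass, ← map_mul]
    refine mk_eq_one_of_commute_pauliClass (fun l => ?_) hk
    rw [map_mul]
    exact (commute_pauliClass k l).mul_left (hx l)
  exact mul_left_cancel (pauli_mul_eq_one.trans (pauliClass_mul_self k).symm)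

end Pauli

section G29

/-- The generators of `G29`, in the order in which consecutive ones do not commute. -/
noncomputable def mukaiMatrix : Fin 4 → Matrix (Fin 4) (Fin 4) ℂ :=
  ![s1, s2, s4, s3]

/-- The doubles of the generators of `G29`, whose entries are Gaussian integers. -/
def doubledMukaiMatrix : Fin 4 → Matrix (Fin 4) (Fin 4) GaussianInt :=
  ![!![2, 0, 0, 0; 0, 2, 0, 0; 0, 0, 2, 0; 0, 0, 0, -2],
    !![1, 1, ⟨0, 1⟩, ⟨0, 1⟩; 1, 1, ⟨0, -1⟩, ⟨0, -1⟩;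
      ⟨0, -1⟩, ⟨0, 1⟩, 1, -1; ⟨0, -1⟩, ⟨0, 1⟩, -1, 1],
    !![2, 0, 0, 0; 0, 0, 2, 0; 0, 2, 0, 0; 0, 0, 0, 2],
    !![0, 2, 0, 0; 2, 0, 0, 0; 0, 0, 2, 0; 0, 0, 0, 2]]

theorem map_doubledMukaiMatrix (s : Fin 4) :
    (doubledMukaiMatrix s).map GaussianInt.toComplex = (2 : ℂ) • mukaiMatrix s := by
  fin_cases s <;> ext i j <;> fin_cases i <;> fin_cases j <;>
    simp [doubledMukaiMatrix, mukaiMatrix, s1, s2, s3, s4, GaussianInt.toComplex_def]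

theorem doubledMukaiMatrix_mul_self (s : Fin 4) :
    doubledMukaiMatrix s * doubledMukaiMatrix s = 4 := by
  revert s
  decide +kernel

theorem mukaiMatrix_mul_self (s : Fin 4) : mukaiMatrix s * mukaiMatrix s = 1 := by
  have four_smul_eq : (2 * 2 : ℂ) • (mukaiMatrix s * mukaiMatrix s) = (2 * 2 : ℂ) • 1 := by
    rw [← smul_mul_smul_comm, ← map_doubledMukaiMatrix, ← Matrix.map_mul,
      doubledMukaiMatrix_mul_self, ← RingHom.mapMatrix_apply, map_ofNat,
      ← Algebra.algebraMap_eq_smul_one, map_mul, map_ofNat]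
    norm_num
  exact smul_right_injective _ (by norm_num : (2 * 2 : ℂ) ≠ 0) four_smul_eq

theorem range_mukaiMatrix : Set.range mukaiMatrix = {s1, s2, s3, s4} := by
  simp only [mukaiMatrix, range_cons, range_empty, Set.union_empty, Set.singleton_union]
  rw [Set.pair_comm]

/-- The generators of `G29` as elements of `GL (Fin 4) ℂ`. -/
noncomputable def mukaiGL (s : Fin 4) : GL (Fin 4) ℂ :=
  ⟨mukaiMatrix s, mukaiMatrix s, mukaiMatrix_mul_self s, mukaiMatrix_mul_self s⟩

theorem isGaussianModel_mukaiGL (s : Fin 4) :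
    IsGaussianModel (doubledMukaiMatrix s) (mukaiGL s) :=
  ⟨2, two_ne_zero, map_doubledMukaiMatrix s⟩

/-- The adjacent transposition of five letters by which a generator of `G29` acts. -/
def adjacentSwap (s : Fin 4) : Perm (Fin 5) :=
  swap s.castSucc s.succ

theorem closure_range_adjacentSwap : Subgroup.closure (Set.range adjacentSwap) = ⊤ :=
  Subgroup.closure_eq_top_of_mclosure_eq_top (Perm.mclosure_swap_castSucc_succ 4)

/-- The double transposition of five letters labelling a nonscalar two-qubit Pauli matrix. The
labels fixing a given letter belong to three pairwise commuting Pauli matrices, so a letter stands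
for one of five triples that partition the nonscalar Pauli matrices. -/
def pauliLabel (k : Fin 4 × Fin 4) : Perm (Fin 5) :=
  !![1, swap 0 2 * swap 3 4, swap 1 4 * swap 0 3, swap 0 1 * swap 2 4;
    swap 2 4 * swap 0 3, swap 2 3 * swap 0 4, swap 1 2 * swap 0 3, swap 1 3 * swap 2 4;
    swap 1 4 * swap 0 2, swap 1 3 * swap 0 2, swap 1 4 * swap 2 3, swap 1 2 * swap 0 4;
    swap 0 1 * swap 3 4, swap 1 2 * swap 3 4, swap 1 3 * swap 0 4, swap 0 1 * swap 2 3] k.1 k.2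

theorem pauliLabel_injective : Function.Injective pauliLabel := by
  decide +kernel

theorem eq_one_of_conj_pauliLabel_eq {τ : Perm (Fin 5)}
    (hτ : ∀ k, τ * pauliLabel k * τ⁻¹ = pauliLabel k) : τ = 1 := by
  revert τ
  decide +kernel

theorem exists_conj_pauliLabel {k l : Fin 4 × Fin 4} (hk : k ≠ 0) (hl : l ≠ 0) :
    ∃ τ : Perm (Fin 5), τ * pauliLabel k * τ⁻¹ = pauliLabel l := by
  revert k l
  decide +kernel

theorem exists_doubledMukaiMatrix_mul_pauli_eq (s : Fin 4) (k : Fin 4 × Fin 4) :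
    ∃ l, adjacentSwap s * pauliLabel k * (adjacentSwap s)⁻¹ = pauliLabel l ∧
      ∃ z : ℤˣ, doubledMukaiMatrix s * pauli k =
        ((z : ℤ) : GaussianInt) • (pauli l * doubledMukaiMatrix s) := by
  revert s k
  decide +kernel

/-- The subgroup of `PGL₄(ℂ) × S₅` through which `PG29` acts on five letters. -/
noncomputable def mukaiPairs : Subgroup (ProjGL (Fin 4) ℂ × Perm (Fin 5)) :=
  jointClosure (fun s => ProjGL.mk (mukaiGL s)) adjacentSwap

theorem map_fst_mukaiPairs : mukaiPairs.map (MonoidHom.fst _ _) = PG29 := by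
  rw [mukaiPairs, ← map_mk_closure_eq_map_fst_jointClosure]
  change (Subgroup.closure {g : GL (Fin 4) ℂ | g.val ∈ Set.range mukaiMatrix}).map _ = _
  rw [range_mukaiMatrix]
  rfl

theorem map_snd_mukaiPairs : mukaiPairs.map (MonoidHom.snd _ _) = ⊤ := by
  rw [mukaiPairs, map_snd_jointClosure, closure_range_adjacentSwap]

theorem mukaiPairs_le_normalizer :
    mukaiPairs ≤ Subgroup.normalizer (Set.range fun k => (pauliClass k, pauliLabel k)) := by
  refine (jointClosure_le_iff _ _ _).2 fun s => Subgroup.mem_normalizer_fintype ?_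
  rintro _ ⟨k, rfl⟩
  obtain ⟨l, label_eq, z, pauli_eq⟩ := exists_doubledMukaiMatrix_mul_pauli_eq s k
  refine ⟨l, Prod.ext ?_ label_eq.symm⟩
  have := ((isGaussianModel_mukaiGL s).mul (isGaussianModel_pauliGL k)).mk_eq_mk
    ((isGaussianModel_pauliGL l).mul (isGaussianModel_mukaiGL s)) _ pauli_eq
  rw [map_mul, map_mul] at this
  exact eq_mul_inv_of_mul_eq this.symm

theorem exists_conj_pauliClass_of_mem {x : ProjGL (Fin 4) ℂ} {τ : Perm (Fin 5)}
    (hx : (x, τ) ∈ mukaiPairs) (k : Fin 4 × Fin 4) :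
    ∃ l, x * pauliClass k * x⁻¹ = pauliClass l ∧ τ * pauliLabel k * τ⁻¹ = pauliLabel l := by
  obtain ⟨l, hl⟩ := (Subgroup.mem_set_normalizer_iff.1 (mukaiPairs_le_normalizer hx) _).1
    (Set.mem_range_self k)
  exact ⟨l, (Prod.ext_iff.1 hl).imp Eq.symm Eq.symm⟩

theorem eq_one_of_mem_mukaiPairs (τ : Perm (Fin 5)) (hτ : (1, τ) ∈ mukaiPairs) : τ = 1 := by
  refine eq_one_of_conj_pauliLabel_eq fun k => ?_
  obtain ⟨l, class_eq, label_eq⟩ := exists_conj_pauliClass_of_mem hτ k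
  rw [one_mul, inv_one, mul_one] at class_eq
  rw [label_eq, pauliClass_injective class_eq]

theorem commute_pauliClass_of_mem_mukaiPairs {x : ProjGL (Fin 4) ℂ} (hx : (x, 1) ∈ mukaiPairs)
    (k : Fin 4 × Fin 4) : Commute x (pauliClass k) := by
  obtain ⟨l, class_eq, label_eq⟩ := exists_conj_pauliClass_of_mem hx k
  rw [one_mul, inv_one, mul_one] at label_eq
  rw [← pauliLabel_injective label_eq] at class_eq
  exact mul_inv_eq_iff_eq_mul.1 class_eq

theorem doubledMukaiMatrix_three_mul_one_sq :
    (doubledMukaiMatrix 3 * doubledMukaiMatrix 1) ^ 2 = (16 : GaussianInt) • pauli (3, 1) := by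
  decide +kernel

theorem pauliClass_three_one_mem : (pauliClass (3, 1), 1) ∈ mukaiPairs := by
  have word_mem := mukaiPairs.pow_mem (mukaiPairs.mul_mem
    (mk_mem_jointClosure _ adjacentSwap 3) (mk_mem_jointClosure _ adjacentSwap 1)) 2
  have class_eq := (((isGaussianModel_mukaiGL 3).mul (isGaussianModel_mukaiGL 1)).pow 2).mk_eq_mk
    (isGaussianModel_pauliGL (3, 1)) 16 doubledMukaiMatrix_three_mul_one_sq
  have swap_eq : (adjacentSwap 3 * adjacentSwap 1) ^ 2 = 1 := by
    decide
  rw [map_pow, map_mul] at class_eq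
  rwa [Prod.mk_mul_mk, Prod.pow_mk, class_eq, swap_eq] at word_mem

theorem pauliClass_mem_mukaiPairs (k : Fin 4 × Fin 4) : (pauliClass k, 1) ∈ mukaiPairs := by
  obtain rfl | hk := eq_or_ne k 0
  · rw [pauliClass_zero]
    exact mukaiPairs.one_mem
  obtain ⟨τ, hτ⟩ := exists_conj_pauliLabel (k := (3, 1)) (by decide) hk
  obtain ⟨⟨x, _⟩, hx, rfl⟩ : τ ∈ mukaiPairs.map (MonoidHom.snd _ _) := by
    rw [map_snd_mukaiPairs]
    trivial
  obtain ⟨l, class_eq, label_eq⟩ := exists_conj_pauliClass_of_mem hx (3, 1)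
  obtain rfl : k = l := pauliLabel_injective (hτ.symm.trans label_eq)
  have conj_mem := mukaiPairs.mul_mem (mukaiPairs.mul_mem hx pauliClass_three_one_mem)
    (mukaiPairs.inv_mem hx)
  rw [← class_eq]
  simpa using conj_mem

theorem coe_comap_inl_mukaiPairs :
    (mukaiPairs.comap (MonoidHom.inl _ _) : Set (ProjGL (Fin 4) ℂ)) = Set.range pauliClass := by
  ext x
  constructor
  · intro hx
    obtain ⟨k, rfl⟩ := exists_eq_pauliClass_of_forall_commute
      (commute_pauliClass_of_mem_mukaiPairs hx)
    exact ⟨k, rfl⟩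
  · rintro ⟨k, rfl⟩
    exact pauliClass_mem_mukaiPairs k

theorem card_PG29 : Nat.card PG29 = 1920 := by
  have card_kernel : Nat.card (mukaiPairs.comap (MonoidHom.inl _ _)) = 16 := by
    rw [← SetLike.coe_sort_coe, coe_comap_inl_mukaiPairs,
      Nat.card_range_of_injective pauliClass_injective]
    simp
  rw [← map_fst_mukaiPairs,
    card_map_fst_eq_card_map_snd_mul_card_comap_inl _ eq_one_of_mem_mukaiPairs,
    map_snd_mukaiPairs, card_kernel, Subgroup.card_top, Nat.card_perm, Nat.card_fin]
  rfl

theorem doubledMukaiMatrix_two_mul_three_mul_one_pow_four :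
    (doubledMukaiMatrix 2 * doubledMukaiMatrix 3 * doubledMukaiMatrix 1) ^ 4 =
      (4096 : GaussianInt) • pauli (2, 2) := by
  decide +kernel

theorem exists_orderOf_eq_eight_PG29 : ∃ x : PG29, orderOf x = 8 := by
  have mk_mem (s) : ProjGL.mk (mukaiGL s) ∈ PG29 :=
    map_fst_mukaiPairs ▸ ⟨_, mk_mem_jointClosure _ adjacentSwap s, rfl⟩
  refine ⟨⟨_, PG29.mul_mem (PG29.mul_mem (mk_mem 2) (mk_mem 3)) (mk_mem 1)⟩, ?_⟩
  rw [Subgroup.orderOf_mk, ← map_mul, ← map_mul]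
  have pow_four := ((((isGaussianModel_mukaiGL 2).mul (isGaussianModel_mukaiGL 3)).mul
    (isGaussianModel_mukaiGL 1)).pow 4).mk_eq_mk (isGaussianModel_pauliGL (2, 2)) _
    doubledMukaiMatrix_two_mul_three_mul_one_pow_four
  rw [map_pow] at pow_four
  refine orderOf_eq_prime_pow (p := 2) (n := 2) ?_ ?_
  · rw [show 2 ^ 2 = 4 from rfl, pow_four]
    exact fun h => absurd (pauliClass_injective (h.trans pauliClass_zero.symm)) (by decide)
  · rw [show 2 ^ (2 + 1) = 4 * 2 from rfl, pow_mul, pow_four, sq]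
    exact pauliClass_mul_self _

end G29

section GBH

/-- The family `t`, `u`, `v` of generators of `GBH`. -/
noncomputable def bhMatrix : Fin 3 → Matrix (Fin 6) (Fin 6) ℂ :=
  ![tBH, uBH, vBH]

/-- The nonzero entries of the monomial matrices `t`, `u`, `v`, indexed by rows. -/
noncomputable def bhWeight : Fin 3 → Fin 6 → ℂ :=
  ![![-1, 1, 1, 1, 1, 1], ![I, 1, 1, -I, 1, 1], 1]

/-- The permutations sending a row of `t`, `u`, `v` to the column of its nonzero entry. -/
def bhAxisPerm : Fin 3 → Perm (Fin 6) :=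
  ![1, c[1, 2] * c[4, 5], c[0, 5, 3, 2, 1]]

/-- The even permutations of five letters whose conjugation action on the `5`-cycles `axisCycle j`
and their inverses matches the action of `t`, `u`, `v` on the forms `±x_j²`. -/
def bhPerm : Fin 3 → Perm (Fin 5) :=
  ![1, c[0, 2] * c[1, 3], c[0, 1, 2, 3, 4]]

theorem range_bhMatrix : Set.range bhMatrix = {tBH, uBH, vBH} := by
  simp only [bhMatrix, Matrix.range_cons, Matrix.range_empty, Set.union_empty,
    Set.singleton_union]

theorem bhMatrix_eq_diagonal_mul_permMatrix (s : Fin 3) :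
    bhMatrix s = diagonal (bhWeight s) * (bhAxisPerm s).permMatrix ℂ := by
  have axisPerm_apply (s j) : bhAxisPerm s j =
      (![![0, 1, 2, 3, 4, 5], ![0, 2, 1, 3, 5, 4], ![5, 0, 1, 2, 4, 3]] : Fin 3 → _) s j := by
    decide +revert
  refine Matrix.ext fun j k => ?_
  rw [diagonal_mul_permMatrix_apply, axisPerm_apply]
  fin_cases s <;> fin_cases j <;> fin_cases k <;> simp [bhMatrix, bhWeight, tBH, uBH, vBH]

theorem det_bhMatrix_ne_zero (s : Fin 3) : (bhMatrix s).det ≠ 0 := by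
  rw [bhMatrix_eq_diagonal_mul_permMatrix, det_mul, det_diagonal, det_permutation]
  refine mul_ne_zero (Finset.prod_ne_zero_iff.2 fun j _ => ?_) (by simp)
  fin_cases s <;> fin_cases j <;> simp [bhWeight]

/-- The generators of `GBH` as elements of `GL (Fin 6) ℂ`. -/
noncomputable def bhGL (s : Fin 3) : GL (Fin 6) ℂ :=
  GeneralLinearGroup.mkOfDetNeZero (bhMatrix s) (det_bhMatrix_ne_zero s)

theorem coe_bhGL (s : Fin 3) : (bhGL s).val = bhMatrix s :=
  rfl

/-- Representatives, up to inversion, of one of the two `A₅`-conjugacy classes of `5`-cycles; they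
label the six coordinate axes by the Sylow `5`-subgroups of `A₅`. -/
def axisCycle : Fin 6 → Perm (Fin 5) :=
  ![c[0, 3, 4, 1, 2], c[0, 2, 3, 1, 4], c[0, 1, 3, 4, 2], c[0, 3, 1, 2, 4], c[0, 1, 2, 3, 4],
    c[0, 1, 4, 2, 3]]

/-- The coefficient of `x_j²` in the quadratic form `axisForm c`. -/
def axisSign (c : Perm (Fin 5)) (j : Fin 6) : ℤ :=
  if c = axisCycle j then 1 else if c = (axisCycle j)⁻¹ then -1 else 0

theorem axisSign_axisCycle (i j : Fin 6) : axisSign (axisCycle i) j = if i = j then 1 else 0 := by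
  decide +revert +kernel

-- The normalizers of the six Sylow `5`-subgroups of `S₅` intersect trivially.
theorem eq_one_of_axisSign_conj_ne_zero (τ : Perm (Fin 5))
    (hτ : ∀ j, axisSign (τ * axisCycle j * τ⁻¹) j ≠ 0) : τ = 1 := by
  decide +revert +kernel

/-- The squares of the entries of `bhWeight`. -/
def bhWeightSq : Fin 3 → Fin 6 → ℤ :=
  ![1, ![-1, 1, 1, -1, 1, 1], 1]

theorem bhWeight_sq (s : Fin 3) (j : Fin 6) : bhWeight s j ^ 2 = bhWeightSq s j := by
  fin_cases s <;> fin_cases j <;> simp [bhWeight, bhWeightSq]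

theorem axisSign_conj_bhPerm_mul_bhWeightSq (s : Fin 3) (c : Perm (Fin 5)) (j : Fin 6) :
    axisSign (bhPerm s * c * (bhPerm s)⁻¹) j * bhWeightSq s j = axisSign c (bhAxisPerm s j) := by
  decide +revert +kernel

/-- The quadratic form `±x_j²` if `c` is the `5`-cycle `axisCycle j` or its inverse, and zero if
there is no such `j`. -/
noncomputable def axisForm (c : Perm (Fin 5)) (v : Fin 6 → ℂ) : ℂ :=
  ∑ j, (axisSign c j : ℂ) * v j ^ 2

/-- The pairs `(A, τ)` for which substitution of `A` permutes the forms `axisForm c` as conjugation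
by `τ` permutes the cycles `c`. -/
def formStabilizer : Subgroup (GL (Fin 6) ℂ × Perm (Fin 5)) where
  carrier := {p | ∀ c v, axisForm (p.2 * c * p.2⁻¹) (p.1.val *ᵥ v) = axisForm c v}
  one_mem' c v := by simp
  mul_mem' {p q} hp hq c v := by
    have := (hp (q.2 * c * q.2⁻¹) (q.1.val *ᵥ v)).trans (hq c v)
    simpa [mul_assoc] using this
  inv_mem' {p} hp c v := by
    have := hp (p.2⁻¹ * c * p.2) (p.1⁻¹.val *ᵥ v)
    rw [mulVec_mulVec, Units.mul_inv, one_mulVec] at this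
    simpa [mul_assoc] using this.symm

theorem bhGL_bhPerm_mem_formStabilizer (s : Fin 3) : (bhGL s, bhPerm s) ∈ formStabilizer := by
  intro c v
  have mulVec_apply (j) : ((bhGL s).val *ᵥ v) j = bhWeight s j * v (bhAxisPerm s j) := by
    rw [coe_bhGL, bhMatrix_eq_diagonal_mul_permMatrix, ← mulVec_mulVec, permMatrix_mulVec,
      mulVec_diagonal]
    rfl
  calc axisForm (bhPerm s * c * (bhPerm s)⁻¹) ((bhGL s).val *ᵥ v)
      = ∑ j, (axisSign c (bhAxisPerm s j) : ℂ) * v (bhAxisPerm s j) ^ 2 := by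
        refine Finset.sum_congr rfl fun j _ => ?_
        rw [mulVec_apply, mul_pow, bhWeight_sq, ← axisSign_conj_bhPerm_mul_bhWeightSq, ← mul_assoc,
          Int.cast_mul]
    _ = axisForm c v := Equiv.sum_comp (bhAxisPerm s) fun j => (axisSign c j : ℂ) * v j ^ 2

/-- The subgroup of `PGL₆(ℂ) × A₅` through which `PGBH` acts on five letters. -/
noncomputable def bhPairs : Subgroup (ProjGL (Fin 6) ℂ × Perm (Fin 5)) :=
  jointClosure (fun s => ProjGL.mk (bhGL s)) bhPerm

theorem exists_mem_formStabilizer_of_mem_bhPairs {x : ProjGL (Fin 6) ℂ} {τ : Perm (Fin 5)}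
    (hx : (x, τ) ∈ bhPairs) : ∃ A, ProjGL.mk A = x ∧ (A, τ) ∈ formStabilizer := by
  have bhPairs_le : bhPairs ≤ formStabilizer.map (ProjGL.mk.prodMap (MonoidHom.id _)) :=
    (jointClosure_le_iff _ _ _).2 fun s => ⟨_, bhGL_bhPerm_mem_formStabilizer s, rfl⟩
  obtain ⟨⟨A, _⟩, hA, rfl, rfl⟩ := bhPairs_le hx
  exact ⟨A, rfl, hA⟩

theorem axisForm_axisCycle (j : Fin 6) (v : Fin 6 → ℂ) : axisForm (axisCycle j) v = v j ^ 2 := by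
  simp [axisForm, axisSign_axisCycle]

theorem eq_one_of_mem_bhPairs (τ : Perm (Fin 5)) (hτ : (1, τ) ∈ bhPairs) : τ = 1 := by
  obtain ⟨A, mk_eq_one, hA⟩ := exists_mem_formStabilizer_of_mem_bhPairs hτ
  obtain ⟨c, hc⟩ := ProjGL.mk_eq_one_iff.1 mk_eq_one
  refine eq_one_of_axisSign_conj_ne_zero τ fun j sign_eq_zero => ?_
  have form_eq := hA (axisCycle j) (Pi.single j 1)
  rw [axisForm_axisCycle, hc, smul_mulVec, one_mulVec] at form_eq
  simp [axisForm, Pi.single_apply, ite_pow, sign_eq_zero] at form_eq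

theorem exists_eq_mk_signGL_of_mem_bhPairs {x : ProjGL (Fin 6) ℂ} (hx : (x, 1) ∈ bhPairs) :
    ∃ ε, x = ProjGL.mk (signGL (Fin 6) ℂ ε) := by
  obtain ⟨A, rfl, hA⟩ := exists_mem_formStabilizer_of_mem_bhPairs hx
  obtain ⟨ε, rfl⟩ := exists_eq_signGL fun v j => by
    simpa [axisForm_axisCycle] using hA (axisCycle j) v
  exact ⟨ε, rfl⟩

theorem bhGL_zero : bhGL 0 = signGL (Fin 6) ℂ (Pi.mulSingle 0 (-1)) := by
  refine Units.ext ?_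
  rw [coe_bhGL, coe_signGL, bhMatrix_eq_diagonal_mul_permMatrix]
  simp only [bhAxisPerm, Matrix.cons_val_zero, permMatrix_one, mul_one]
  congr! with j
  fin_cases j <;> simp [bhWeight]

theorem mk_signGL_comp_mem_bhPairs (s : Fin 3) {ε : Fin 6 → ℤˣ}
    (hε : (ProjGL.mk (signGL (Fin 6) ℂ ε), 1) ∈ bhPairs) :
    (ProjGL.mk (signGL (Fin 6) ℂ (ε ∘ bhAxisPerm s)), 1) ∈ bhPairs := by
  have gen_mem := mk_mem_jointClosure (fun s => ProjGL.mk (bhGL s)) bhPerm s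
  have conj_mem := bhPairs.mul_mem (bhPairs.mul_mem gen_mem hε) (bhPairs.inv_mem gen_mem)
  have conj_eq := mul_signGL_mul_inv_of_eq_diagonal_mul_permMatrix
    ((coe_bhGL s).trans (bhMatrix_eq_diagonal_mul_permMatrix s)) ε
  simpa [← conj_eq] using conj_mem

theorem mk_signGL_mem_bhPairs (ε : Fin 6 → ℤˣ) :
    (ProjGL.mk (signGL (Fin 6) ℂ ε), 1) ∈ bhPairs := by
  let signs := bhPairs.comap ((MonoidHom.inl _ _).comp (ProjGL.mk.comp (signGL (Fin 6) ℂ)))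
  have mulSingle_mem (s j) (h : Pi.mulSingle (bhAxisPerm s j) (-1) ∈ signs) :
      Pi.mulSingle j (-1) ∈ signs := by
    have comp_eq : Pi.mulSingle (bhAxisPerm s j) (-1 : ℤˣ) ∘ bhAxisPerm s = Pi.mulSingle j (-1) :=
      funext fun k => by simp [Pi.mulSingle_apply]
    exact comp_eq ▸ mk_signGL_comp_mem_bhPairs s h
  have axis_zero : Pi.mulSingle 0 (-1) ∈ signs := by
    have := mk_mem_jointClosure (fun s => ProjGL.mk (bhGL s)) bhPerm 0
    rwa [bhGL_zero] at this
  have axis_one := mulSingle_mem 2 1 axis_zero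
  have axis_two := mulSingle_mem 2 2 axis_one
  have axis_three := mulSingle_mem 2 3 axis_two
  have axis_five := mulSingle_mem 2 5 axis_three
  have axis_four := mulSingle_mem 1 4 axis_five
  refine Subgroup.pi_mem_of_mulSingle_mem (H := signs) ε fun j => ?_
  obtain h | h := Int.units_eq_one_or (ε j)
  · rw [h, Pi.mulSingle_one]
    exact signs.one_mem
  · rw [h]
    fin_cases j
    exacts [axis_zero, axis_one, axis_two, axis_three, axis_four, axis_five]

theorem map_fst_bhPairs : bhPairs.map (MonoidHom.fst _ _) = PGBH := by
  have range_coe : (Set.range fun s => (bhGL s).val) = {tBH, uBH, vBH} := by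
    simp only [coe_bhGL, range_bhMatrix]
  rw [bhPairs, ← map_mk_closure_eq_map_fst_jointClosure, range_coe]
  rfl

theorem map_snd_bhPairs : bhPairs.map (MonoidHom.snd _ _) = alternatingGroup (Fin 5) := by
  rw [bhPairs, map_snd_jointClosure]
  refine le_antisymm ?_ ?_
  · rw [Subgroup.closure_le]
    rintro _ ⟨s, rfl⟩
    change Perm.sign _ = 1
    decide +revert
  · have perm_mem (s) : bhPerm s ∈ Subgroup.closure (Set.range bhPerm) :=
      Subgroup.subset_closure ⟨s, rfl⟩
    refine alternatingGroup_le_of_isCycle_mem_of_isThreeCycle_mem (σ := finRotate 5)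
      (τ := bhPerm 1 * bhPerm 2 ^ 2) (by simpa using Nat.prime_five) isCycle_finRotate
      support_finRotate ?_ ?_ ?_
    · exact (by decide : bhPerm 2 = finRotate 5) ▸ perm_mem 2
    · exact card_support_eq_three_iff.1 (by decide)
    · exact mul_mem (perm_mem 1) (pow_mem (perm_mem 2) 2)

theorem card_PGBH : Nat.card PGBH = 1920 := by
  have kernel_eq : bhPairs.comap (MonoidHom.inl _ _) =
      (ProjGL.mk.comp (signGL (Fin 6) ℂ)).range := by
    ext x
    constructor
    · intro hx
      obtain ⟨ε, rfl⟩ := exists_eq_mk_signGL_of_mem_bhPairs hx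
      exact ⟨ε, rfl⟩
    · rintro ⟨ε, rfl⟩
      exact mk_signGL_mem_bhPairs ε
  have card_alternating : 2 * Nat.card (alternatingGroup (Fin 5)) = 120 := by
    rw [two_mul_nat_card_alternatingGroup, Nat.card_perm, Nat.card_fin]
    decide
  have card_signs := card_range_mk_signGL (n := Fin 6) (R := ℂ)
  rw [Fintype.card_fin] at card_signs
  rw [← map_fst_bhPairs,
    card_map_fst_eq_card_map_snd_mul_card_comap_inl _ eq_one_of_mem_bhPairs,
    map_snd_bhPairs, kernel_eq]
  lia

theorem exists_pow_eq_one_of_mem_alternatingGroup_fin_five {τ : Perm (Fin 5)}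
    (hτ : τ ∈ alternatingGroup (Fin 5)) : ∃ n ∈ ({2, 3, 5} : Finset ℕ), τ ^ n = 1 := by
  rw [Perm.mem_alternatingGroup] at hτ
  decide +revert +kernel

theorem orderOf_ne_eight_PGBH (x : PGBH) : orderOf x ≠ 8 := by
  obtain ⟨x, hx⟩ := x
  rw [Subgroup.orderOf_mk]
  obtain ⟨⟨x, τ⟩, hxτ, rfl⟩ := map_fst_bhPairs.symm ▸ hx
  change orderOf x ≠ 8
  have hτ : τ ∈ alternatingGroup (Fin 5) := map_snd_bhPairs ▸ ⟨_, hxτ, rfl⟩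
  obtain ⟨n, hn, τ_pow⟩ := exists_pow_eq_one_of_mem_alternatingGroup_fin_five hτ
  have pow_mem := bhPairs.pow_mem hxτ n
  rw [Prod.pow_mk, τ_pow] at pow_mem
  obtain ⟨ε, hε⟩ := exists_eq_mk_signGL_of_mem_bhPairs pow_mem
  have pow_eq_one : x ^ (n * 2) = 1 := by
    rw [pow_mul, hε, sq, ← map_mul, signGL_mul_self, map_one]
  intro order_eq
  have order_dvd := orderOf_dvd_of_pow_eq_one pow_eq_one
  rw [order_eq] at order_dvd
  fin_cases hn <;> lia

end GBH

/-- `PG₂₉` and `PG_BH` both have order `1920`, but they are not isomorphic. -/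
theorem stmt_18 :
    Nat.card PG29 = 1920 ∧ Nat.card PGBH = 1920 ∧ IsEmpty (PG29 ≃* PGBH) := by
  refine ⟨card_PG29, card_PGBH, ⟨fun f => ?_⟩⟩
  obtain ⟨x, orderOf_x⟩ := exists_orderOf_eq_eight_PG29
  exact orderOf_ne_eight_PGBH (f x) ((f.orderOf_eq x).trans orderOf_x)
end
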